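/- For n, q ≥ 1, the number of (q-1)-multichains of the poset ONC_{2n+1} = [e, (1 2 ... 2n+1)]_3 with prescribed rank jump vector (r_1,...,r_q) (with r_1 + ... + r_q = n) equals (2n+1)^{q-1} · Π_{i=1}^{q} [1/(2n+1-r_i)] · C(2n+1-r_i, r_i). -/

import Mathlib

open Equiv Equiv.Perm

/-- The word length of `x` with respect to a generating set `T`. -/
noncomputable def lenT {G : Type*} [Group G] (T : Set G) (x : G) : ℕ :=
  sInf {n | ∃ l : List G, (∀ t ∈ l, t ∈ T) ∧ l.prod = x ∧ l.length = n}

/-- The `T`-prefix order. -/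
def leT {G : Type*} [Group G] (T : Set G) (x y : G) : Prop :=
  lenT T y = lenT T x + lenT T (x⁻¹ * y)

/-- The set of 3-cycles of the symmetric group on `Fin N`. -/
def threeCycles (N : ℕ) : Set (Perm (Fin N)) := {σ | σ.IsThreeCycle}

/-- The set of transpositions of the symmetric group on `Fin N`. -/
def transpositions (N : ℕ) : Set (Perm (Fin N)) := {σ | σ.IsSwap}

/-- The number of odd cycles of a permutation, counting fixed points. -/
def ocyc {N : ℕ} (x : Perm (Fin N)) : ℕ :=
  (x.cycleType.filter (fun n => Odd n)).card + (N - x.cycleType.sum)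

/-!
Taking quotients of consecutive terms turns the multichains with rank jumps `r i` into the
factorizations of the long cycle `c` of `N = 2 n + 1` points into permutations `y i` of absolute
length `2 * r i` all of whose cycles are odd: such permutations are exactly those for which minimal
words in 3-cycles realize half of the absolute length. Since the lengths of the factors add up to
`N - 1`, the cycles of the `y i` hang together as the polygons of a cactus, and conversely the
product of a cactus is a full cycle.

Let `E J` be the exponential generating function of cacti rooted at a point fixed by all `y j` with
`j ∈ J`. If `y j` moves the root, then splitting off the first 3-cycle of its cycle leaves three
rooted cacti, whence `E J = E (insert j J) + x_j ^ 2 * E J * E {j} ^ 2`, while `E univ = t`.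
Lagrange inversion expresses the coefficients of `E ∅` through those of Lucas polynomials, and the
coefficient of `x ^ r` in the `N`-th Lucas polynomial is `N / (N - r) * choose (N - r) r`.

Cycle counts enter only through linear algebra on the functions `V → ℚ`: the number of cycles of
`σ` is the dimension of the space of `σ`-invariant functions, and `σ` has only odd cycles if and
only if it does not have the eigenvalue `-1`.
-/

section LagrangeInversion

open PowerSeries

variable {R : Type*} [CommRing R] [NoZeroDivisors R] [CharZero R] {A T : PowerSeries R}

theorem coeff_pow_succ_mul_derivative (hA : constantCoeff A = 0) (h : A * T = X) (m : ℕ) :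
    coeff m (T ^ (m + 1) * derivative R A) = if m = 0 then 1 else 0 := by
  have leibniz : derivative R A * T + A * derivative R T = 1 := by
    have := congrArg (derivative R) h
    simp only [Derivation.leibniz, derivative_X, smul_eq_mul] at this
    linear_combination this
  rcases m with _ | m
  · have : T ^ (0 + 1) * derivative R A = 1 - A * derivative R T := by linear_combination leibniz
    rw [this]
    simp [hA]
  · have expand : T ^ (m + 1 + 1) * derivative R A
        = T ^ (m + 1) - X * (T ^ m * derivative R T) := by
      rw [← h]; linear_combination T ^ (m + 1) * leibniz
    have pow_rule : derivative R (T ^ (m + 1))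
        = ((m + 1 : ℕ) : PowerSeries R) * (T ^ m * derivative R T) := by
      simp [Derivation.leibniz_pow]
    have cancel : ((m + 1 : ℕ) : R) * coeff (m + 1) (X * (T ^ m * derivative R T)) =
        ((m + 1 : ℕ) : R) * coeff (m + 1) (T ^ (m + 1)) := by
      have := congrArg (coeff m) pow_rule
      rw [coeff_derivative, ← map_natCast (C (R := R)), coeff_C_mul] at this
      rw [coeff_succ_X_mul, ← this]
      push_cast
      ring
    have succ_ne_zero : ((m + 1 : ℕ) : R) ≠ 0 := Nat.cast_ne_zero.mpr m.succ_ne_zero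
    rw [expand, map_sub, mul_left_cancel₀ succ_ne_zero cancel]
    simp

theorem coeff_pow_succ_mul_pow_mul_derivative (hA : constantCoeff A = 0) (h : A * T = X)
    (n k : ℕ) :
    coeff n (T ^ (n + 1) * A ^ k * derivative R A) = if k = n then 1 else 0 := by
  rcases le_or_gt k n with hk | hk
  · obtain ⟨d, rfl⟩ := Nat.exists_eq_add_of_le hk
    have : T ^ (k + d + 1) * A ^ k * derivative R A = X ^ k * (T ^ (d + 1) * derivative R A) := by
      rw [← h]; ring
    rw [this, add_comm k d, coeff_X_pow_mul, coeff_pow_succ_mul_derivative hA h]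
    simp
  · obtain ⟨B, rfl⟩ : X ∣ A := X_dvd_iff.mpr hA
    have : T ^ (n + 1) * (X * B) ^ k * derivative R (X * B)
        = X ^ k * (B ^ k * T ^ (n + 1) * derivative R (X * B)) := by ring
    rw [this, coeff_X_pow_mul', if_neg hk.not_ge, if_neg hk.ne']

-- Lagrange inversion for the compositional inverse `A` of `X / φ`, with `T = 1 / φ(A)`: the
-- polynomial `G` stands for a truncation of `φ ^ (n + 1)`.
theorem succ_mul_coeff_eq_coeff_of_dvd (hA : constantCoeff A = 0) (h : A * T = X) (n : ℕ)
    (G : Polynomial R) (hG : X ^ (n + 1) ∣ T ^ (n + 1) * Polynomial.aeval A G - 1) :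
    ((n + 1 : ℕ) : R) * coeff (n + 1) A = G.coeff n := by
  have coeff_term (k : ℕ) : coeff n (T ^ (n + 1) * (G.coeff k • A ^ k) * derivative R A)
      = if k = n then G.coeff k else 0 := by
    rw [mul_smul_comm, smul_mul_assoc, map_smul, coeff_pow_succ_mul_pow_mul_derivative hA h]
    simp
  calc ((n + 1 : ℕ) : R) * coeff (n + 1) A
      = coeff n (derivative R A) := by rw [coeff_derivative, mul_comm]; push_cast; rfl
    _ = coeff n (T ^ (n + 1) * Polynomial.aeval A G * derivative R A) := by
        obtain ⟨w, hw⟩ := hG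
        have : T ^ (n + 1) * Polynomial.aeval A G * derivative R A
            = derivative R A + X ^ (n + 1) * (w * derivative R A) := by
          linear_combination derivative R A * hw
        rw [this, map_add, coeff_X_pow_mul']
        simp
    _ = ∑ k ∈ Finset.range (G.natDegree + 1), if k = n then G.coeff k else 0 := by
        rw [Polynomial.aeval_eq_sum_range, Finset.mul_sum, Finset.sum_mul, map_sum]
        exact Finset.sum_congr rfl fun k _ ↦ coeff_term k
    _ = G.coeff n := by
        rw [Finset.sum_ite_eq', ite_eq_left_iff, Finset.mem_range, not_lt]
        exact fun hn ↦ (G.coeff_eq_zero_of_natDegree_lt hn).symm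

end LagrangeInversion

section LucasPolynomials

open Polynomial

variable (R : Type*) [CommSemiring R]

/-- The Lucas polynomials in the variable `x` of the recursion
`L (n + 2) = L (n + 1) + x * L n`, started at `2` and `1`. -/
noncomputable def lucasPoly : ℕ → R[X]
  | 0 => 2
  | 1 => 1
  | n + 2 => lucasPoly (n + 1) + X * lucasPoly n

theorem lucasPoly_coeff_zero (n : ℕ) : (lucasPoly R (n + 1)).coeff 0 = 1 := by
  induction n with
  | zero => simp [lucasPoly]
  | succ n ih => simp [lucasPoly, ih]

theorem lucasPoly_coeff_succ (n r : ℕ) : (lucasPoly R (n + 2)).coeff (r + 1)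
    = (lucasPoly R (n + 1)).coeff (r + 1) + (lucasPoly R n).coeff r := by
  simp [lucasPoly]

theorem lucasPoly_coeff_eq_zero_of_lt : ∀ {n r : ℕ}, n < 2 * r → (lucasPoly R n).coeff r = 0
  | 0, r + 1, _ => by simp [lucasPoly]
  | 1, r + 1, _ => by simp [lucasPoly, coeff_one]
  | n + 2, r + 1, h => by
    rw [lucasPoly_coeff_succ, lucasPoly_coeff_eq_zero_of_lt (by lia),
      lucasPoly_coeff_eq_zero_of_lt (by lia), add_zero]

theorem lucasPoly_coeff_succ_eq_choose_add_choose (r d : ℕ) :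
    (lucasPoly R (r + d + 2)).coeff (r + 1) = (d + 1).choose (r + 1) + d.choose r := by
  induction d generalizing r with
  | zero =>
    rw [lucasPoly_coeff_succ, lucasPoly_coeff_eq_zero_of_lt R (by lia)]
    rcases r with _ | r
    · simp [lucasPoly, one_add_one_eq_two]
    · rw [lucasPoly_coeff_eq_zero_of_lt R (by lia), Nat.choose_eq_zero_of_lt (by lia)]
      simp
  | succ d ih =>
    rw [lucasPoly_coeff_succ, show r + (d + 1) + 1 = r + d + 2 by ring, ih]
    rcases r with _ | r
    · rw [show 0 + (d + 1) = d + 1 by ring, lucasPoly_coeff_zero]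
      push_cast [Nat.choose_zero_right, Nat.choose_one_right]
      ring
    · rw [show r + 1 + (d + 1) = r + d + 2 by ring, ih, Nat.choose_succ_succ (d + 1),
        Nat.choose_succ_succ d r]
      push_cast
      ring

theorem mul_lucasPoly_coeff (r d : ℕ) :
    d * (lucasPoly R (r + d)).coeff r = ((r + d) * d.choose r : ℕ) := by
  rcases d with _ | d
  · cases r <;> simp
  rcases r with _ | r
  · simp [lucasPoly_coeff_zero]
  · rw [show r + 1 + (d + 1) = r + d + 2 by ring, lucasPoly_coeff_succ_eq_choose_add_choose]
    have := Nat.add_one_mul_choose_eq d r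
    norm_cast
    congr 1
    linear_combination this

variable {R}

theorem pow_mul_aeval_lucasPoly {S : Type*} [CommRing S] [Algebra R S] {s D : S}
    (h : D + s * D ^ 2 = 1) :
    ∀ n, D ^ n * aeval s (lucasPoly R n) = 1 + (D - 1) ^ n
  | 0 => by simp [lucasPoly, one_add_one_eq_two, map_ofNat]
  | 1 => by simp [lucasPoly]
  | n + 2 => by
    have ih₀ := pow_mul_aeval_lucasPoly h n
    have ih₁ := pow_mul_aeval_lucasPoly h (n + 1)
    rw [lucasPoly, map_add, map_mul, aeval_X]
    linear_combination D * ih₁ + s * D ^ 2 * ih₀ + (1 + (D - 1) ^ n) * h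

end LucasPolynomials

section FunctionalEquations

theorem coeff_coeff_prod_comp_C_mul_X {R ι : Type*} [CommSemiring R] [Fintype ι]
    (P : ι → Polynomial R) (s : ι → ℕ) :
    MvPolynomial.coeff (Finsupp.equivFunOnFinite.symm s)
      ((∏ j, ((P j).map MvPolynomial.C).comp
        (Polynomial.C (MvPolynomial.X j) * Polynomial.X)).coeff (∑ i, s i))
      = ∏ i, (P i).coeff (s i) := by
  classical
  set B := (Finset.univ.sup fun j ↦ max (P j).natDegree (s j)) + 1
  have lt_bound (j : ι) : (P j).natDegree < B ∧ s j < B := by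
    have := Finset.le_sup (f := fun j ↦ max (P j).natDegree (s j)) (Finset.mem_univ j)
    grind
  have comp_eq_sum (j : ι) : ((P j).map MvPolynomial.C).comp
      (Polynomial.C (MvPolynomial.X j : MvPolynomial ι R) * Polynomial.X)
      = ∑ k ∈ Finset.range B, Polynomial.C (MvPolynomial.C ((P j).coeff k)) *
        (Polynomial.C (MvPolynomial.X j) * Polynomial.X) ^ k := by
    rw [Polynomial.comp, Polynomial.eval₂_map, Polynomial.eval₂_eq_sum_range' _ (lt_bound j).1]
    rfl
  have prod_monomials (p : ι → ℕ) :
      ∏ j, Polynomial.C (MvPolynomial.C ((P j).coeff (p j))) *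
        (Polynomial.C (MvPolynomial.X j : MvPolynomial ι R) * Polynomial.X) ^ p j
      = Polynomial.C (MvPolynomial.monomial (Finsupp.equivFunOnFinite.symm p)
          (∏ j, (P j).coeff (p j))) * Polynomial.X ^ (∑ i, p i) := by
    simp [mul_pow, Finset.prod_mul_distrib, MvPolynomial.monomial_eq, Finset.prod_pow_eq_pow_sum,
      mul_assoc, Finsupp.prod_fintype]
  simp_rw [comp_eq_sum, Finset.prod_univ_sum, prod_monomials, Polynomial.finsetSum_coeff,
    MvPolynomial.coeff_sum, Polynomial.coeff_C_mul_X_pow]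
  rw [Finset.sum_eq_single s]
  · simp
  · intro p _ hp
    split_ifs
    · rw [MvPolynomial.coeff_monomial, if_neg (by simpa using hp)]
    · simp
  · exact fun hs ↦ absurd (Fintype.mem_piFinset.mpr fun j ↦ Finset.mem_range.mpr (lt_bound j).2) hs

theorem dvd_prod_one_add_sub_one {R ι : Type*} [CommRing R] (a : R) (u : ι → R) (s : Finset ι)
    (h : ∀ j ∈ s, a ∣ u j) : a ∣ ∏ j ∈ s, (1 + u j) - 1 := by
  rw [← Ideal.mem_span_singleton, ← Ideal.Quotient.eq, map_prod, map_one]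
  refine Finset.prod_eq_one fun j hj ↦ ?_
  rw [map_add, map_one, Ideal.Quotient.eq_zero_iff_mem.mpr (Ideal.mem_span_singleton.mpr (h j hj)),
    add_zero]

open PowerSeries

variable {ι : Type*} [DecidableEq ι] {R : Type*} [CommRing R]

theorem eq_mul_prod_of_insert_recursion {c : ι → R} {E : Finset ι → PowerSeries R}
    (hE : ∀ J, ∀ j ∉ J, E J = E (insert j J) + C (c j) * (E J * E {j} ^ 2)) (J : Finset ι) :
    E J = E ∅ * ∏ j ∈ J, (1 - C (c j) * E {j} ^ 2) := by
  induction J using Finset.induction_on with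
  | empty => simp
  | insert j J hj ih =>
    rw [Finset.prod_insert hj]
    linear_combination -hE J j hj + (1 - C (c j) * E {j} ^ 2) * ih

variable [Fintype ι] [NoZeroDivisors R] [CharZero R]

-- With `A = E ∅` and `D j = 1 - (X j) ^ 2 * (E {j}) ^ 2`, the recursion says `A * ∏ D j = t` and
-- `D j + (X j * A) ^ 2 * D j ^ 2 = 1`, so Lucas polynomials invert the powers of the `D j`.
theorem succ_mul_coeff_coeff_empty {E : Finset ι → PowerSeries (MvPolynomial ι R)}
    (hE₀ : ∀ J, constantCoeff (E J) = 0) (hE_univ : E Finset.univ = X)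
    (hE : ∀ J, ∀ j ∉ J,
      E J = E (insert j J) + C (MvPolynomial.X j ^ 2) * (E J * E {j} ^ 2))
    (r : ι → ℕ) {n : ℕ} (hr : ∑ i, 2 * r i = n) :
    ((n + 1 : ℕ) : R) *
        MvPolynomial.coeff (Finsupp.equivFunOnFinite.symm fun i ↦ 2 * r i) (coeff (n + 1) (E ∅))
      = ∏ i, (lucasPoly R (n + 1)).coeff (r i) := by
  have factor := eq_mul_prod_of_insert_recursion hE
  set A := E ∅
  set D : ι → PowerSeries (MvPolynomial ι R) :=
    fun j ↦ 1 - C (MvPolynomial.X j ^ 2) * E {j} ^ 2 with hD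
  have A_mul_prod : A * ∏ j, D j = X := by rw [← hE_univ, factor]
  have quadratic (j : ι) : D j + (C (MvPolynomial.X j) * A) ^ 2 * D j ^ 2 = 1 := by
    have singleton : E {j} = A * D j := by rw [factor, Finset.prod_singleton]
    calc D j + (C (MvPolynomial.X j) * A) ^ 2 * D j ^ 2
        = D j + C (MvPolynomial.X j ^ 2) * E {j} ^ 2 := by rw [singleton, map_pow]; ring
      _ = 1 := by rw [hD]; ring
  set G : Polynomial (MvPolynomial ι R) :=
    ∏ j, ((Polynomial.expand R 2 (lucasPoly R (n + 1))).map MvPolynomial.C).comp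
      (Polynomial.C (MvPolynomial.X j) * Polynomial.X) with hG
  have aeval_G : (∏ j, D j) ^ (n + 1) * Polynomial.aeval A G = ∏ j, (1 + (D j - 1) ^ (n + 1)) := by
    rw [hG, map_prod, ← Finset.prod_pow, ← Finset.prod_mul_distrib]
    refine Finset.prod_congr rfl fun j _ ↦ ?_
    rw [← pow_mul_aeval_lucasPoly (R := R) (quadratic j), Polynomial.aeval_comp,
      ← MvPolynomial.algebraMap_eq, Polynomial.aeval_map_algebraMap, Polynomial.expand_aeval]
    simp
  have lagrange := succ_mul_coeff_eq_coeff_of_dvd (hE₀ ∅) A_mul_prod n G <| by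
    rw [aeval_G]
    refine dvd_prod_one_add_sub_one _ _ _ fun j _ ↦ pow_dvd_pow_of_dvd ?_ _
    simp [X_dvd_iff, hD, hE₀]
  have := congrArg (MvPolynomial.coeff (Finsupp.equivFunOnFinite.symm fun i ↦ 2 * r i)) lagrange
  rw [← map_natCast MvPolynomial.C, MvPolynomial.coeff_C_mul] at this
  rw [this, hG, ← hr, coeff_coeff_prod_comp_C_mul_X]
  simp [mul_comm 2]

end FunctionalEquations

section ExponentialGeneratingFunctions

open PowerSeries

variable {K R : Type*} [CommRing R] [Algebra ℚ R]

/-- The exponential generating function `∑ b n * t ^ n / n!` of a sequence `b`. -/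
noncomputable def egf (b : ℕ → R) : PowerSeries R :=
  PowerSeries.mk fun n ↦ algebraMap ℚ R (1 / n.factorial) * b n

theorem coeff_egf (b : ℕ → R) (n : ℕ) :
    coeff n (egf b) = algebraMap ℚ R (1 / n.factorial) * b n :=
  coeff_mk n _

theorem factorial_mul_coeff_egf (b : ℕ → R) (n : ℕ) :
    (n.factorial : R) * coeff n (egf b) = b n := by
  rw [coeff_egf, ← mul_assoc, ← map_natCast (algebraMap ℚ R), ← map_mul,
    mul_one_div_cancel (by positivity), map_one, one_mul]

theorem factorial_mul_left_injective (n : ℕ) : Function.Injective fun x : R ↦ n.factorial * x := by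
  intro x y hxy
  have : IsUnit (algebraMap ℚ R n.factorial) :=
    (IsUnit.mk0 _ (Nat.cast_ne_zero.mpr n.factorial_ne_zero)).map _
  rw [map_natCast] at this
  exact this.mul_left_cancel hxy

theorem derivative_egf (b : ℕ → R) : derivative R (egf b) = egf fun n ↦ b (n + 1) := by
  ext n
  apply factorial_mul_left_injective n
  simp only [factorial_mul_coeff_egf, coeff_derivative]
  rw [← factorial_mul_coeff_egf b (n + 1), Nat.factorial_succ]
  push_cast
  ring

theorem derivative_prod_egf [DecidableEq K] (b : K → ℕ → R) (s : Finset K) :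
    derivative R (∏ k ∈ s, egf (b k))
      = ∑ l ∈ s, ∏ k ∈ s, egf fun n ↦ b k (if k = l then n + 1 else n) := by
  induction s using Finset.induction_on with
  | empty => simp
  | insert j s hj ih =>
    have old_factor : ∏ k ∈ s, egf (b k)
        = ∏ k ∈ s, egf fun n ↦ b k (if k = j then n + 1 else n) :=
      Finset.prod_congr rfl fun k hk ↦ by simp [ne_of_mem_of_not_mem hk hj]
    have new_factor (l : K) (hl : l ∈ s) :
        (egf fun n ↦ b j (if j = l then n + 1 else n)) = egf (b j) := by
      simp [(ne_of_mem_of_not_mem hl hj).symm]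
    rw [Finset.prod_insert hj, Derivation.leibniz, ih, derivative_egf, Finset.sum_insert hj,
      Finset.prod_insert hj, ← old_factor, smul_eq_mul, smul_eq_mul, Finset.mul_sum, add_comm,
      mul_comm]
    congr 1
    · simp
    · exact Finset.sum_congr rfl fun l hl ↦ by rw [Finset.prod_insert hj, new_factor l hl]

-- Differentiating moves the last element of `Fin (N + 1)` into one of the fibres.
theorem sum_prod_card_fiber_eq_factorial_mul_coeff [Fintype K] [DecidableEq K] (N : ℕ)
    (b : K → ℕ → R) :
    ∑ κ : Fin N → K, ∏ k, b k (Finset.univ.filter fun x ↦ κ x = k).card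
      = N.factorial * coeff N (∏ k, egf (b k)) := by
  induction N generalizing b with
  | zero => simp [egf]
  | succ N ih =>
    have coeff_succ : ((N + 1).factorial : R) * coeff (N + 1) (∏ k, egf (b k))
        = N.factorial * coeff N (derivative R (∏ k, egf (b k))) := by
      rw [coeff_derivative, Nat.factorial_succ]
      push_cast
      ring
    rw [coeff_succ, derivative_prod_egf, map_sum, Finset.mul_sum,
      ← (Fin.consEquiv fun _ ↦ K).sum_comp, Fintype.sum_prod_type]
    refine Finset.sum_congr rfl fun l _ ↦ ?_
    rw [← ih]
    refine Finset.sum_congr rfl fun κ _ ↦ Finset.prod_congr rfl fun k _ ↦ ?_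
    rw [Fin.card_filter_univ_succ]
    simp [Fin.consEquiv, eq_comm (a := l)]

end ExponentialGeneratingFunctions

section Codimension

variable {F E : Type*} [Field F] [AddCommGroup E] [Module F E] [FiniteDimensional F E]

theorem finrank_quotient_inf_add (U W : Submodule F E) :
    Module.finrank F (E ⧸ (U ⊓ W)) + Module.finrank F (E ⧸ (U ⊔ W))
      = Module.finrank F (E ⧸ U) + Module.finrank F (E ⧸ W) := by
  have := Submodule.finrank_sup_add_finrank_inf_eq U W
  have := (U ⊓ W).finrank_quotient_add_finrank
  have := (U ⊔ W).finrank_quotient_add_finrank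
  have := U.finrank_quotient_add_finrank
  have := W.finrank_quotient_add_finrank
  lia

theorem finrank_quotient_inf_eq_add_iff {U W : Submodule F E} :
    Module.finrank F (E ⧸ (U ⊓ W)) = Module.finrank F (E ⧸ U) + Module.finrank F (E ⧸ W)
      ↔ U ⊔ W = ⊤ := by
  rw [← finrank_quotient_inf_add, Nat.left_eq_add, Module.finrank_eq_zero_iff_of_free,
    Submodule.Quotient.subsingleton_iff]

theorem finrank_quotient_anti {U W : Submodule F E} (h : U ≤ W) :
    Module.finrank F (E ⧸ W) ≤ Module.finrank F (E ⧸ U) :=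
  LinearMap.finrank_le_finrank_of_surjective (f := Submodule.factor h)
    (Submodule.factor_surjective h)

theorem finrank_quotient_iInf_le {ι : Type*} [Fintype ι] (U : ι → Submodule F E) :
    Module.finrank F (E ⧸ ⨅ i, U i) ≤ ∑ i, Module.finrank F (E ⧸ U i) := by
  have ker_eq : LinearMap.ker (LinearMap.pi fun i ↦ (U i).mkQ) = ⨅ i, U i := by
    simp [LinearMap.ker_pi]
  rw [← ker_eq, LinearEquiv.finrank_eq (LinearMap.quotKerEquivRange _), ← Module.finrank_pi_fintype]
  exact Submodule.finrank_le _

end Codimension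

section InvariantFunctions

variable {V : Type*}

/-- The functions on `V` that are constant on the cycles of `σ`. -/
def invariantFunctions (σ : Perm V) : Submodule ℚ (V → ℚ) where
  carrier := {f | ∀ x, f (σ x) = f x}
  add_mem' hf hg x := congrArg₂ (· + ·) (hf x) (hg x)
  zero_mem' _ := rfl
  smul_mem' c _ hf x := congrArg (c • ·) (hf x)

theorem mem_invariantFunctions {σ : Perm V} {f : V → ℚ} :
    f ∈ invariantFunctions σ ↔ ∀ x, f (σ x) = f x := Iff.rfl

/-- The absolute length of a permutation of a finite type: the number of points minus the number
of cycles, here as the codimension of the space of invariant functions. -/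
noncomputable def absLength (σ : Perm V) : ℕ :=
  Module.finrank ℚ ((V → ℚ) ⧸ invariantFunctions σ)

theorem invariantFunctions_one : invariantFunctions (1 : Perm V) = ⊤ :=
  eq_top_iff.mpr fun _ _ _ ↦ rfl

theorem absLength_one : absLength (1 : Perm V) = 0 := by
  rw [absLength, invariantFunctions_one]
  exact Module.finrank_zero_of_subsingleton

theorem mul_mem_invariantFunctions {σ : Perm V} {f g : V → ℚ} (hf : f ∈ invariantFunctions σ)
    (hg : g ∈ invariantFunctions σ) : f * g ∈ invariantFunctions σ :=
  fun x ↦ congrArg₂ (· * ·) (hf x) (hg x)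

theorem const_mem_invariantFunctions (σ : Perm V) (c : ℚ) :
    Function.const V c ∈ invariantFunctions σ := fun _ ↦ rfl

theorem mem_iInf_invariantFunctions {ι : Type*} {y : ι → Perm V} {f : V → ℚ} :
    f ∈ ⨅ i, invariantFunctions (y i) ↔ ∀ i x, f (y i x) = f x := by
  simp [Submodule.mem_iInf, mem_invariantFunctions]

theorem inf_invariantFunctions_le_mul (σ τ : Perm V) :
    invariantFunctions σ ⊓ invariantFunctions τ ≤ invariantFunctions (σ * τ) := by
  rintro f ⟨hσ, hτ⟩ x
  rw [Perm.mul_apply, hσ, hτ]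

-- If `f` is invariant under `σ * τ`, then `f ∘ σ - f` is orthogonal to both spaces.
theorem invariantFunctions_mul [Finite V] {σ τ : Perm V}
    (h : invariantFunctions σ ⊔ invariantFunctions τ = ⊤) :
    invariantFunctions (σ * τ) = invariantFunctions σ ⊓ invariantFunctions τ := by
  have := Fintype.ofFinite V
  refine le_antisymm (fun f hf ↦ ?_) (inf_invariantFunctions_le_mul σ τ)
  have f_apply (x : V) : f (σ (τ x)) = f x := hf x
  set g : V → ℚ := fun x ↦ f (σ x) - f x with hg
  have orthogonal_left : ∀ e ∈ invariantFunctions σ, ∑ x, g x * e x = 0 := by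
    intro e he
    calc ∑ x, g x * e x = ∑ x, f (σ x) * e (σ x) - ∑ x, f x * e x := by
          rw [← Finset.sum_sub_distrib]
          exact Finset.sum_congr rfl fun x _ ↦ by rw [he x, hg]; ring
      _ = 0 := by rw [Equiv.sum_comp σ fun x ↦ f x * e x, sub_self]
  have orthogonal_right : ∀ e ∈ invariantFunctions τ, ∑ x, g x * e x = 0 := by
    intro e he
    calc ∑ x, g x * e x = ∑ x, g (τ x) * e (τ x) := (Equiv.sum_comp τ fun x ↦ g x * e x).symm
      _ = ∑ x, f x * e x - ∑ x, f (τ x) * e (τ x) := by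
          rw [← Finset.sum_sub_distrib]
          exact Finset.sum_congr rfl fun x _ ↦ by rw [hg, he x]; simp only [f_apply]; ring
      _ = 0 := by rw [Equiv.sum_comp τ fun x ↦ f x * e x, sub_self]
  have norm_zero : ∑ x, g x * g x = 0 := by
    obtain ⟨a, ha, b, hb, hab⟩ := Submodule.mem_sup.mp (h.symm ▸ Submodule.mem_top : g ∈ _ ⊔ _)
    conv_lhs => enter [2, x, 2]; rw [← hab]
    simp only [Pi.add_apply, mul_add, Finset.sum_add_distrib, orthogonal_left a ha,
      orthogonal_right b hb, add_zero]
  have g_zero (x : V) : f (σ x) = f x := by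
    rw [Fintype.sum_eq_zero_iff_of_nonneg fun x ↦ mul_self_nonneg (g x)] at norm_zero
    exact sub_eq_zero.mp (mul_self_eq_zero.mp (congrFun norm_zero x))
  exact ⟨g_zero, fun x ↦ by rw [← g_zero, f_apply]⟩

theorem absLength_mul_le [Finite V] (σ τ : Perm V) :
    absLength (σ * τ) ≤ absLength σ + absLength τ := by
  have := finrank_quotient_inf_add (invariantFunctions σ) (invariantFunctions τ)
  have := finrank_quotient_anti (inf_invariantFunctions_le_mul σ τ)
  simp only [absLength]
  lia

theorem absLength_mul_eq_add_iff [Finite V] {σ τ : Perm V} :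
    absLength (σ * τ) = absLength σ + absLength τ
      ↔ invariantFunctions σ ⊔ invariantFunctions τ = ⊤ := by
  refine ⟨fun h ↦ ?_, fun h ↦ ?_⟩
  · have := finrank_quotient_inf_add (invariantFunctions σ) (invariantFunctions τ)
    have := finrank_quotient_anti (inf_invariantFunctions_le_mul σ τ)
    rw [← finrank_quotient_inf_eq_add_iff]
    simp only [absLength] at h
    lia
  · rw [absLength, invariantFunctions_mul h, finrank_quotient_inf_eq_add_iff.mpr h]
    rfl

theorem iInf_fin_succ {L : Type*} [CompleteLattice L] {q : ℕ} (u : Fin (q + 1) → L) :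
    ⨅ i, u i = u 0 ⊓ ⨅ i : Fin q, u i.succ :=
  le_antisymm (le_inf (iInf_le u 0) (le_iInf fun i ↦ iInf_le u i.succ))
    (le_iInf (Fin.cases inf_le_left fun i ↦ inf_le_right.trans (iInf_le _ i)))

theorem iInf_invariantFunctions_le_prod_ofFn {q : ℕ} (y : Fin q → Perm V) :
    ⨅ i, invariantFunctions (y i) ≤ invariantFunctions (List.ofFn y).prod := by
  induction q with
  | zero => rw [List.ofFn_zero, List.prod_nil, invariantFunctions_one]; exact le_top
  | succ q ih =>
    rw [List.ofFn_succ, List.prod_cons, iInf_fin_succ]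
    exact (inf_le_inf_left _ (ih _)).trans (inf_invariantFunctions_le_mul _ _)

theorem absLength_prod_ofFn_le [Finite V] {q : ℕ} (y : Fin q → Perm V) :
    absLength (List.ofFn y).prod ≤ ∑ i, absLength (y i) :=
  (finrank_quotient_anti (iInf_invariantFunctions_le_prod_ofFn y)).trans
    (finrank_quotient_iInf_le _)

theorem invariantFunctions_prod_ofFn [Finite V] {q : ℕ} {y : Fin q → Perm V}
    (h : ∑ i, absLength (y i) ≤ Module.finrank ℚ ((V → ℚ) ⧸ ⨅ i, invariantFunctions (y i))) :
    invariantFunctions (List.ofFn y).prod = ⨅ i, invariantFunctions (y i) := by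
  induction q with
  | zero => rw [List.ofFn_zero, List.prod_nil, invariantFunctions_one, iInf_of_empty]
  | succ q ih =>
    set tail := ⨅ i : Fin q, invariantFunctions (y i.succ) with tail_def
    have split : ⨅ i, invariantFunctions (y i) = invariantFunctions (y 0) ⊓ tail :=
      iInf_fin_succ _
    have codim_le := finrank_quotient_inf_add (invariantFunctions (y 0)) tail
    have tail_le : Module.finrank ℚ ((V → ℚ) ⧸ tail) ≤ ∑ i : Fin q, absLength (y i.succ) :=
      finrank_quotient_iInf_le _
    rw [split, Fin.sum_univ_succ] at h
    rw [absLength] at h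
    have tail_ge : ∑ i : Fin q, absLength (y i.succ) ≤ Module.finrank ℚ ((V → ℚ) ⧸ tail) := by lia
    have tail_eq : invariantFunctions (List.ofFn fun i ↦ y i.succ).prod = tail := ih tail_ge
    have transversal : invariantFunctions (y 0) ⊔ tail = ⊤ :=
      finrank_quotient_inf_eq_add_iff.mp (by lia)
    rw [List.ofFn_succ, List.prod_cons, split, ← tail_eq]
    exact invariantFunctions_mul (by rw [tail_eq, transversal])

end InvariantFunctions

section OddCycles

variable {V : Type*}

/-- All cycles of the permutation of a finite type have odd length; equivalently, `-1` is not an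
eigenvalue of its action on functions. -/
def HasOddCycles (σ : Perm V) : Prop :=
  ∀ f : V → ℚ, (∀ x, f (σ x) = -f x) → f = 0

theorem hasOddCycles_of_pow_eq_one {σ : Perm V} {k : ℕ} (hk : Odd k) (h : σ ^ k = 1) :
    HasOddCycles σ := by
  intro f hf
  have apply_pow (j : ℕ) (x : V) : f ((σ ^ j) x) = (-1) ^ j * f x := by
    induction j with
    | zero => simp
    | succ j ih => rw [pow_succ', Perm.mul_apply, hf, ih, pow_succ]; ring
  ext x
  have := apply_pow k x
  rw [h, hk.neg_one_pow, Perm.one_apply, neg_one_mul] at this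
  exact self_eq_neg.mp this

theorem hasOddCycles_one : HasOddCycles (1 : Perm V) :=
  hasOddCycles_of_pow_eq_one odd_one (pow_one 1)

theorem HasOddCycles.apply_eq_of_apply_eq_neg [Finite V] {σ : Perm V} (hσ : HasOddCycles σ)
    {f : V → ℚ} {p : V} (hf : ∀ x ≠ p, f (σ x) = -f x) : f (σ p) = f p := by
  classical
  have := Fintype.ofFinite V
  have sum_sq : ∑ x, f (σ x) ^ 2 = ∑ x, f x ^ 2 := Equiv.sum_comp σ fun x ↦ f x ^ 2
  have rest : ∑ x ∈ Finset.univ.erase p, f (σ x) ^ 2 = ∑ x ∈ Finset.univ.erase p, f x ^ 2 :=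
    Finset.sum_congr rfl fun x hx ↦ by rw [hf x (Finset.ne_of_mem_erase hx), neg_sq]
  have sq_eq : f (σ p) ^ 2 = f p ^ 2 := by
    rw [← Finset.sum_erase_add _ _ (Finset.mem_univ p), rest,
      ← Finset.sum_erase_add (a := p) _ (fun x ↦ f x ^ 2) (Finset.mem_univ p)] at sum_sq
    exact add_left_cancel sum_sq
  rcases sq_eq_sq_iff_eq_or_eq_neg.mp sq_eq with h | h
  · exact h
  · have := hσ f fun x ↦ (eq_or_ne x p).elim (fun hx ↦ hx ▸ h) (hf x)
    simp [this]

end OddCycles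

section Triangles

variable {V : Type*}

theorem injective_orbit_of_apply_ne {σ : Perm V} {x : V} (h₁ : σ x ≠ x) (h₂ : σ (σ x) ≠ x) :
    Function.Injective ![x, σ x, σ (σ x)] := by
  have := σ.injective.ne h₁
  intro k l
  fin_cases k <;> fin_cases l <;> simp [h₁, h₁.symm, h₂, h₂.symm, this, this.symm]

variable [DecidableEq V]

/-- The permutation `p 0 ↦ p 1 ↦ p 2 ↦ p 0`, a 3-cycle when `p` is injective. -/
def triangle (p : Fin 3 → V) : Perm V := swap (p 0) (p 1) * swap (p 1) (p 2)

variable {p : Fin 3 → V} {σ : Perm V}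

theorem triangle_apply (hp : p.Injective) (k : Fin 3) : triangle p (p k) = p (k + 1) := by
  have h01 : p 0 ≠ p 1 := hp.ne (by decide)
  have h02 : p 0 ≠ p 2 := hp.ne (by decide)
  have h12 : p 1 ≠ p 2 := hp.ne (by decide)
  fin_cases k <;> simp [triangle, swap_apply_of_ne_of_ne, h01, h02, h02.symm, h12.symm]

theorem triangle_apply_of_notMem {x : V} (hx : x ∉ Set.range p) : triangle p x = x := by
  have (k : Fin 3) : x ≠ p k := fun h ↦ hx ⟨k, h.symm⟩
  simp [triangle, swap_apply_of_ne_of_ne, this]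

theorem isThreeCycle_triangle [Fintype V] (hp : p.Injective) : (triangle p).IsThreeCycle := by
  rw [triangle, swap_comm (p 0)]
  exact isThreeCycle_swap_mul_swap_same (hp.ne (by decide)) (hp.ne (by decide)) (hp.ne (by decide))

theorem exists_eq_triangle_of_isThreeCycle [Fintype V] (h : σ.IsThreeCycle) :
    ∃ p : Fin 3 → V, p.Injective ∧ σ = triangle p := by
  obtain ⟨x, hx⟩ : σ.support.Nonempty := by
    rw [← Finset.card_pos, h.card_support]
    norm_num
  have pow_three : σ (σ (σ x)) = x := by
    have : σ ^ 3 = 1 := h.orderOf ▸ pow_orderOf_eq_one σ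
    simpa [pow_succ] using DFunLike.congr_fun this x
  have h₁ : σ x ≠ x := mem_support.mp hx
  have h₂ : σ (σ x) ≠ x := fun h₂ ↦ h₁ (by rw [h₂] at pow_three; exact pow_three)
  exact ⟨_, injective_orbit_of_apply_ne h₁ h₂, h.eq_swap_mul_swap_iff_mem_support.mpr hx⟩

theorem mem_invariantFunctions_triangle (hp : p.Injective) {f : V → ℚ} :
    f ∈ invariantFunctions (triangle p) ↔ ∀ k, f (p k) = f (p 0) := by
  refine ⟨fun hf ↦ ?_, fun hf x ↦ ?_⟩
  · have step (k : Fin 3) : f (p (k + 1)) = f (p k) := by rw [← triangle_apply hp, hf]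
    exact Fin.forall_fin_succ.mpr ⟨rfl, Fin.forall_fin_two.mpr ⟨step 0, (step 1).trans (step 0)⟩⟩
  · by_cases hx : x ∈ Set.range p
    · obtain ⟨k, rfl⟩ := hx
      rw [triangle_apply hp, hf, hf k]
    · rw [triangle_apply_of_notMem hx]

theorem absLength_triangle (hp : p.Injective) : absLength (triangle p) = 2 := by
  let differences : (V → ℚ) →ₗ[ℚ] (Fin 2 → ℚ) :=
    LinearMap.funLeft ℚ ℚ (p ∘ Fin.succ) - LinearMap.funLeft ℚ ℚ (Function.const _ (p 0))
  have ker_eq : LinearMap.ker differences = invariantFunctions (triangle p) := by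
    ext f
    simp [differences, mem_invariantFunctions_triangle hp, funext_iff, sub_eq_zero,
      Fin.forall_fin_succ]
  have surjective : Function.Surjective differences := fun v ↦
    ⟨Function.extend p (Fin.cons 0 v) 0, by ext k; simp [differences, hp.extend_apply]⟩
  rw [absLength, ← ker_eq, (differences.quotKerEquivOfSurjective surjective).finrank_eq,
    Module.finrank_fin_fun]

theorem HasOddCycles.mul_triangle [Finite V] (hσ : HasOddCycles σ) (hp : p.Injective)
    (h : invariantFunctions σ ⊔ invariantFunctions (triangle p) = ⊤) :
    HasOddCycles (σ * triangle p) := by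
  have indicator (k : Fin 3) :
      ∃ e ∈ invariantFunctions σ, ∀ l, e (p l) = if l = k then 1 else 0 := by
    obtain ⟨e, he, e', he', hs⟩ := Submodule.mem_sup.mp
      (h.symm ▸ Submodule.mem_top : (fun x ↦ if x = p k then (1 : ℚ) else 0) ∈ _ ⊔ _)
    refine ⟨e + Function.const V (e' (p 0)),
      add_mem he (const_mem_invariantFunctions σ _), fun l ↦ ?_⟩
    have := congrFun hs (p l)
    simpa [hp.eq_iff, (mem_invariantFunctions_triangle hp).mp he' l] using this
  intro f hf
  have off_range (x : V) (hx : x ∉ Set.range p) : f (σ x) = -f x := by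
    rw [← hf, Perm.mul_apply, triangle_apply_of_notMem hx]
  have on_range (k : Fin 3) : f (σ (p (k + 1))) = -f (p k) := by
    rw [← hf, Perm.mul_apply, triangle_apply hp]
  have balanced (k : Fin 3) : f (σ (p k)) = f (p k) := by
    obtain ⟨e, he, e_apply⟩ := indicator k
    have := hσ.apply_eq_of_apply_eq_neg (f := f * e) (p := p k) fun x hx ↦ by
      simp only [Pi.mul_apply, he x]
      by_cases hxp : x ∈ Set.range p
      · obtain ⟨l, rfl⟩ := hxp
        simp [e_apply, ne_of_apply_ne p hx]
      · rw [off_range x hxp, neg_mul]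
    simpa [he (p k), e_apply] using this
  have alternates (k : Fin 3) : f (p (k + 1)) = -f (p k) := by rw [← balanced, on_range]
  have zero_on_range (k : Fin 3) : f (p k) = 0 := by
    have : k + 1 + 1 + 1 = k := by decide +revert
    have := congrArg (f ∘ p) this
    simp only [Function.comp_apply, alternates] at this
    linarith
  refine hσ f fun x ↦ ?_
  by_cases hx : x ∈ Set.range p
  · obtain ⟨k, rfl⟩ := hx
    rw [balanced, zero_on_range, neg_zero]
  · exact off_range x hx

end Triangles

section AttachingTriangles

variable {V : Type*}

/-- The triangle `p` meets the non-trivial cycles of `σ` at most in `p 0`, so that multiplying by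
it enlarges the cycle of `p 0` by the two points `p 1` and `p 2`. -/
structure IsAttachSite (σ : Perm V) (p : Fin 3 → V) : Prop where
  injective : p.Injective
  apply_eq : ∀ k ≠ 0, σ (p k) = p k

namespace IsAttachSite

variable {σ : Perm V} {p : Fin 3 → V}

theorem apply_eq_iff (h : IsAttachSite σ p) {k : Fin 3} (hk : k ≠ 0) {x : V} :
    σ x = p k ↔ x = p k := by
  conv_lhs => rw [← h.apply_eq k hk]
  exact σ.injective.eq_iff

variable [DecidableEq V]

theorem sup_eq_top (h : IsAttachSite σ p) :
    invariantFunctions σ ⊔ invariantFunctions (triangle p) = ⊤ := by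
  refine eq_top_iff.mpr fun f _ ↦ ?_
  set g : V → ℚ := fun x ↦
    if x = p 1 then f (p 1) - f (p 0) else if x = p 2 then f (p 2) - f (p 0) else 0 with hg
  have g_mem : g ∈ invariantFunctions σ := fun x ↦ by
    simp only [hg, h.apply_eq_iff (k := 1) (by decide), h.apply_eq_iff (k := 2) (by decide)]
  have sub_mem : f - g ∈ invariantFunctions (triangle p) := by
    rw [mem_invariantFunctions_triangle h.injective]
    intro k
    fin_cases k <;> simp [hg, h.injective.eq_iff]
  rw [← add_sub_cancel g f]
  exact Submodule.add_mem_sup g_mem sub_mem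

theorem hasOddCycles_of_mul_triangle (h : IsAttachSite σ p)
    (hodd : HasOddCycles (σ * triangle p)) : HasOddCycles σ := by
  intro f hf
  have zero_of_ne (k : Fin 3) (hk : k ≠ 0) : f (p k) = 0 := by
    have := hf (p k)
    rw [h.apply_eq k hk] at this
    exact self_eq_neg.mp this
  set g : V → ℚ := fun x ↦ if x = p 1 then -f (p 0) else if x = p 2 then f (p 0) else f x with hg
  have g_apply_σ (x : V) : x ≠ p 1 → x ≠ p 2 → g (σ x) = -f x := fun h₁ h₂ ↦ by
    simp [hg, h.apply_eq_iff (k := 1) (by decide), h.apply_eq_iff (k := 2) (by decide), h₁, h₂, hf]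
  have g_zero : g = 0 := hodd g fun x ↦ by
    by_cases hx : x ∈ Set.range p
    · obtain ⟨k, rfl⟩ := hx
      rw [Perm.mul_apply, triangle_apply h.injective]
      fin_cases k
      · simp [h.apply_eq, hg, h.injective.eq_iff]
      · simp [h.apply_eq, hg, h.injective.eq_iff]
      · exact (g_apply_σ _ (h.injective.ne (by decide)) (h.injective.ne (by decide))).trans
          (by simp [hg, h.injective.eq_iff])
    · have (k : Fin 3) : x ≠ p k := fun h ↦ hx ⟨k, h.symm⟩
      rw [Perm.mul_apply, triangle_apply_of_notMem hx, g_apply_σ x (this 1) (this 2)]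
      simp [hg, this]
  ext x
  by_cases h₁ : x = p 1
  · rw [h₁, zero_of_ne 1 (by decide), Pi.zero_apply]
  by_cases h₂ : x = p 2
  · rw [h₂, zero_of_ne 2 (by decide), Pi.zero_apply]
  simpa [hg, h₁, h₂] using congrFun g_zero x

variable [Finite V]

theorem invariantFunctions_mul_triangle (h : IsAttachSite σ p) :
    invariantFunctions (σ * triangle p)
      = invariantFunctions σ ⊓ invariantFunctions (triangle p) :=
  invariantFunctions_mul h.sup_eq_top

theorem absLength_mul_triangle (h : IsAttachSite σ p) :
    absLength (σ * triangle p) = absLength σ + 2 := by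
  rw [absLength_mul_eq_add_iff.mpr h.sup_eq_top, absLength_triangle h.injective]

theorem hasOddCycles_mul_triangle_iff (h : IsAttachSite σ p) :
    HasOddCycles (σ * triangle p) ↔ HasOddCycles σ :=
  ⟨h.hasOddCycles_of_mul_triangle, fun hσ ↦ hσ.mul_triangle h.injective h.sup_eq_top⟩

end IsAttachSite

theorem HasOddCycles.apply_apply_ne {σ : Perm V} (hσ : HasOddCycles σ) {x : V} (hx : σ x ≠ x) :
    σ (σ x) ≠ x := by
  classical
  intro h
  have := hσ (fun y ↦ if y = x then 1 else if y = σ x then -1 else 0) fun y ↦ by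
    have apply_eq_iff : σ y = x ↔ y = σ x := by
      conv_lhs => rw [← h]
      exact σ.injective.eq_iff
    by_cases hyx : y = x
    · simp [hyx, hx]
    · by_cases hyσ : y = σ x <;> simp [apply_eq_iff, hyx, hyσ, hx, h]
  simpa using congrFun this x

variable [DecidableEq V]

theorem HasOddCycles.exists_eq_mul_triangle {σ : Perm V} (hσ : HasOddCycles σ) {x : V}
    (hx : σ x ≠ x) :
    ∃ τ, IsAttachSite τ ![x, σ x, σ (σ x)] ∧ σ = τ * triangle ![x, σ x, σ (σ x)] := by
  have injective := injective_orbit_of_apply_ne hx (hσ.apply_apply_ne hx)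
  set p := ![x, σ x, σ (σ x)]
  refine ⟨σ * (triangle p)⁻¹, ⟨injective, fun k hk ↦ ?_⟩, by group⟩
  obtain ⟨l, hl, rfl⟩ : ∃ l, p (l + 1) = σ (p l) ∧ k = l + 1 := by
    fin_cases k
    · exact absurd rfl hk
    · exact ⟨0, rfl, rfl⟩
    · exact ⟨1, rfl, rfl⟩
  rw [Perm.mul_apply, ← triangle_apply injective, Perm.inv_eq_iff_eq.mpr rfl,
    triangle_apply injective, hl]

@[elab_as_elim]
theorem HasOddCycles.induction_on [Finite V] {motive : Perm V → Prop} {σ : Perm V}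
    (hσ : HasOddCycles σ) (one : motive 1)
    (mul_triangle : ∀ τ p, IsAttachSite τ p → motive τ → motive (τ * triangle p)) :
    motive σ := by
  induction h : absLength σ using Nat.strong_induction_on generalizing σ with
  | _ n ih =>
    by_cases hσ₁ : σ = 1
    · exact hσ₁ ▸ one
    obtain ⟨x, hx⟩ : ∃ x, σ x ≠ x := by
      by_contra! hfix
      exact hσ₁ (Perm.ext hfix)
    obtain ⟨τ, site, hτ⟩ := hσ.exists_eq_mul_triangle hx
    rw [hτ, site.hasOddCycles_mul_triangle_iff] at hσ
    rw [hτ, site.absLength_mul_triangle] at h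
    exact hτ ▸ mul_triangle τ _ site (ih _ (by lia) hσ rfl)

end AttachingTriangles

section Transport

variable {V W : Type*} (e : V ≃ W) {σ : Perm V}

theorem mem_invariantFunctions_permCongr {f : W → ℚ} :
    f ∈ invariantFunctions (e.permCongr σ) ↔ f ∘ e ∈ invariantFunctions σ := by
  simp [mem_invariantFunctions, e.forall_congr_left (p := fun x ↦ f (e (σ x)) = f (e x))]

theorem absLength_permCongr : absLength (e.permCongr σ) = absLength σ := by
  have map_eq : (invariantFunctions (e.permCongr σ)).map
      (LinearEquiv.funCongrLeft ℚ ℚ e : (W → ℚ) →ₗ[ℚ] (V → ℚ)) = invariantFunctions σ := by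
    ext f
    rw [Submodule.mem_map_equiv, mem_invariantFunctions_permCongr]
    simp [Function.comp_assoc, LinearEquiv.funCongrLeft_symm, LinearMap.funLeft]
  exact (Submodule.Quotient.equiv _ _ _ map_eq).finrank_eq

theorem HasOddCycles.permCongr (h : HasOddCycles σ) : HasOddCycles (e.permCongr σ) := by
  intro f hf
  have comp_zero : f ∘ e = 0 := h _ fun x ↦ by simpa using hf (e x)
  ext x
  simpa using congrFun comp_zero (e.symm x)

theorem hasOddCycles_permCongr : HasOddCycles (e.permCongr σ) ↔ HasOddCycles σ :=
  ⟨fun h ↦ e.permCongr.symm_apply_apply σ ▸ h.permCongr e.symm, fun h ↦ h.permCongr e⟩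

end Transport

section DisjointUnion

variable {K : Type*} {V : K → Type*} {u : ∀ k, Perm (V k)}

theorem mem_invariantFunctions_sigmaCongrRight {f : (Σ k, V k) → ℚ} :
    f ∈ invariantFunctions (Perm.sigmaCongrRight u)
      ↔ ∀ k, (fun x ↦ f ⟨k, x⟩) ∈ invariantFunctions (u k) := by
  simp [mem_invariantFunctions, Sigma.forall]

theorem hasOddCycles_sigmaCongrRight :
    HasOddCycles (Perm.sigmaCongrRight u) ↔ ∀ k, HasOddCycles (u k) := by
  classical
  refine ⟨fun h k f hf ↦ ?_, fun h f hf ↦ ?_⟩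
  · have extension_zero := h (fun x ↦ Pi.single (M := fun k ↦ V k → ℚ) k f x.1 x.2) fun ⟨l, x⟩ ↦ by
      obtain rfl | hl := eq_or_ne l k
      · simpa [Perm.sigmaCongrRight, Equiv.sigmaCongrRight] using hf x
      · simp [hl]
    ext x
    simpa using congrFun extension_zero ⟨k, x⟩
  · ext ⟨k, x⟩
    exact congrFun (h k (fun x ↦ f ⟨k, x⟩) fun x ↦ hf ⟨k, x⟩) x

theorem absLength_sigmaCongrRight [Fintype K] [∀ k, Finite (V k)] :
    absLength (Perm.sigmaCongrRight u) = ∑ k, absLength (u k) := by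
  classical
  have map_eq : (invariantFunctions (Perm.sigmaCongrRight u)).map
      (LinearEquiv.piCurry ℚ fun k (_ : V k) ↦ ℚ : ((Σ k, V k) → ℚ) →ₗ[ℚ] ∀ k, V k → ℚ)
      = Submodule.pi Set.univ fun k ↦ invariantFunctions (u k) := by
    ext f
    rw [Submodule.mem_map_equiv, mem_invariantFunctions_sigmaCongrRight]
    simp [Submodule.mem_pi, Sigma.uncurry]
  rw [absLength, (Submodule.Quotient.equiv _ _ _ map_eq).finrank_eq,
    (Submodule.quotientPi _).finrank_eq, Module.finrank_pi_fintype]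
  rfl

end DisjointUnion

section Glue

variable {V K : Type*} {κ : V → K}

/-- The permutation of `V` that restricts to the given permutations on the fibres of `κ`. -/
def glue (κ : V → K) (u : ∀ k, Perm {x // κ x = k}) : Perm V :=
  (Equiv.sigmaFiberEquiv κ).permCongr (Perm.sigmaCongrRight u)

theorem glue_apply (u : ∀ k, Perm {x // κ x = k}) {k : K} (x : {x // κ x = k}) :
    glue κ u x = u k x := by
  obtain ⟨x, rfl⟩ := x
  rfl

theorem mem_invariantFunctions_glue {u : ∀ k, Perm {x // κ x = k}} {f : V → ℚ} :
    f ∈ invariantFunctions (glue κ u)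
      ↔ ∀ k, (fun x : {x // κ x = k} ↦ f x) ∈ invariantFunctions (u k) :=
  (mem_invariantFunctions_permCongr _).trans mem_invariantFunctions_sigmaCongrRight

theorem hasOddCycles_glue {u : ∀ k, Perm {x // κ x = k}} :
    HasOddCycles (glue κ u) ↔ ∀ k, HasOddCycles (u k) :=
  (hasOddCycles_permCongr _).trans hasOddCycles_sigmaCongrRight

theorem absLength_glue [Finite V] [Fintype K] (u : ∀ k, Perm {x // κ x = k}) :
    absLength (glue κ u) = ∑ k, absLength (u k) :=
  (absLength_permCongr _).trans absLength_sigmaCongrRight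

theorem apply_glue (u : ∀ k, Perm {x // κ x = k}) (x : V) : κ (glue κ u x) = κ x :=
  (u (κ x) ⟨x, rfl⟩).2

theorem eq_of_invariant_glue_iff {ι : Type*} {u : ∀ k, ι → Perm {x // κ x = k}} :
    (∀ f ∈ ⨅ i, invariantFunctions (glue κ fun k ↦ u k i), ∀ x x', κ x = κ x' → f x = f x')
      ↔ ∀ k, ∀ f ∈ ⨅ i, invariantFunctions (u k i), ∀ x x', f x = f x' := by
  classical
  simp only [Submodule.mem_iInf]
  refine ⟨fun h k f hf x x' ↦ ?_, fun h f hf x x' hx ↦ ?_⟩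
  · set extension : V → ℚ := fun x ↦ if hx : κ x = k then f ⟨x, hx⟩ else 0 with hext
    have extension_apply (x : {x // κ x = k}) : extension x = f x := by simp [hext, x.2]
    have extension_mem (i : ι) : extension ∈ invariantFunctions (glue κ fun k ↦ u k i) := by
      rw [mem_invariantFunctions_glue]
      intro l
      obtain rfl | hl := eq_or_ne l k
      · simpa only [extension_apply] using hf i
      · exact fun x ↦ by simp [hext, (u l i x).2, x.2, hl]
    simpa only [extension_apply] using h extension extension_mem x x' (x.2.trans x'.2.symm)
  · exact h (κ x) (fun x ↦ f x) (fun i ↦ mem_invariantFunctions_glue.mp (hf i) (κ x))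
      ⟨x, rfl⟩ ⟨x', hx.symm⟩

/-- Gluing identifies families of permutations of the fibres of `κ` with the permutations of `V`
that preserve `κ`. -/
def glueEquiv (κ : V → K) :
    (∀ k, Perm {x // κ x = k}) ≃ {σ : Perm V // ∀ x, κ (σ x) = κ x} where
  toFun u := ⟨glue κ u, apply_glue u⟩
  invFun σ k := σ.1.subtypePerm fun x ↦ by rw [σ.2]
  left_inv u := by
    ext k x
    exact glue_apply u x
  right_inv _ := rfl

end Glue

section Cacti

variable {V K ι : Type*} [Fintype ι]

/-- The cycles of the permutations `y i` all have odd length and hang together like the polygons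
of a cactus: the `y i` have a single common orbit, and no polygon is superfluous for that. -/
structure IsCactus (y : ι → Perm V) : Prop where
  hasOddCycles : ∀ i, HasOddCycles (y i)
  eq_of_invariant : ∀ f ∈ ⨅ i, invariantFunctions (y i), ∀ x x', f x = f x'
  sum_absLength : ∑ i, absLength (y i) + 1 = Nat.card V

/-- The family `z` splits into one cactus on each fibre of `κ`. -/
structure IsCactusForest (κ : V → K) (z : ι → Perm V) : Prop where
  apply_eq : ∀ i x, κ (z i x) = κ x
  hasOddCycles : ∀ i, HasOddCycles (z i)
  eq_of_invariant : ∀ f ∈ ⨅ i, invariantFunctions (z i), ∀ x x', κ x = κ x' → f x = f x'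
  sum_absLength : ∑ i, absLength (z i) + Nat.card K = Nat.card V

theorem natCard_le_sum_absLength_add_finrank [Finite V] (y : ι → Perm V) :
    Nat.card V
      ≤ ∑ i, absLength (y i) + Module.finrank ℚ ↥(⨅ i, invariantFunctions (y i)) := by
  have := Fintype.ofFinite V
  rw [Nat.card_eq_fintype_card, ← Module.finrank_fintype_fun_eq_card ℚ,
    ← Submodule.finrank_quotient_add_finrank (⨅ i, invariantFunctions (y i))]
  exact Nat.add_le_add_right (finrank_quotient_iInf_le _) _

theorem finrank_quotient_add_one_of_forall_const [Finite V] [Nonempty V] {U : Submodule ℚ (V → ℚ)}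
    (one_mem : 1 ∈ U) (h : ∀ f ∈ U, ∀ x x', f x = f x') :
    Module.finrank ℚ ((V → ℚ) ⧸ U) + 1 = Nat.card V := by
  have := Fintype.ofFinite V
  have ⟨x⟩ := ‹Nonempty V›
  have finrank_eq_one : Module.finrank ℚ U = 1 := by
    refine finrank_eq_one ⟨1, one_mem⟩ (by simp) fun ⟨f, hf⟩ ↦
      ⟨f x, Subtype.ext (funext fun x' ↦ ?_)⟩
    simp [h f hf x x']
  rw [Nat.card_eq_fintype_card, ← Module.finrank_fintype_fun_eq_card ℚ,
    ← Submodule.finrank_quotient_add_finrank U, finrank_eq_one]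

theorem natCard_le_sum_absLength_add_one [Finite V] {y : ι → Perm V}
    (h : ∀ f ∈ ⨅ i, invariantFunctions (y i), ∀ x x', f x = f x') :
    Nat.card V ≤ ∑ i, absLength (y i) + 1 := by
  cases isEmpty_or_nonempty V
  · simp
  rw [← finrank_quotient_add_one_of_forall_const
    (mem_iInf_invariantFunctions.mpr fun _ _ ↦ rfl) h]
  exact Nat.add_le_add_right (finrank_quotient_iInf_le _) _

theorem natCard_eq_sum_natCard_fiber [Finite V] [Fintype K] (κ : V → K) :
    Nat.card V = ∑ k, Nat.card {x // κ x = k} := by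
  rw [← Nat.card_sigma, Nat.card_congr (Equiv.sigmaFiberEquiv κ)]

variable {κ : V → K}

theorem isCactusForest_glue_iff [Finite V] [Finite K] {u : ∀ k, ι → Perm {x // κ x = k}} :
    IsCactusForest κ (fun i ↦ glue κ fun k ↦ u k i) ↔ ∀ k, IsCactus (u k) := by
  have := Fintype.ofFinite K
  have sum_absLength : ∑ i, absLength (glue κ fun k ↦ u k i) + Nat.card K
      = ∑ k, (∑ i, absLength (u k i) + 1) := by
    simp only [absLength_glue, Finset.sum_add_distrib]
    rw [Finset.sum_comm]
    simp
  refine ⟨fun h k ↦ ?_, fun h ↦ ?_⟩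
  · have eq_of_invariant := eq_of_invariant_glue_iff.mp h.eq_of_invariant
    have card_eq := (Finset.sum_eq_sum_iff_of_le fun k _ ↦
      natCard_le_sum_absLength_add_one (eq_of_invariant k)).mp
        (by rw [← natCard_eq_sum_natCard_fiber, ← sum_absLength, h.sum_absLength])
    exact ⟨fun i ↦ hasOddCycles_glue.mp (h.hasOddCycles i) k, eq_of_invariant k,
      (card_eq k (Finset.mem_univ k)).symm⟩
  · refine ⟨fun i ↦ apply_glue _, fun i ↦ hasOddCycles_glue.mpr fun k ↦ (h k).hasOddCycles i,
      eq_of_invariant_glue_iff.mpr fun k ↦ (h k).eq_of_invariant, ?_⟩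
    rw [sum_absLength, natCard_eq_sum_natCard_fiber κ]
    exact Finset.sum_congr rfl fun k _ ↦ (h k).sum_absLength

theorem exists_dual_invariantFunctions [Finite V] [Finite K] [DecidableEq K]
    {z : ι → Perm V} {p : K → V}
    (determined : ∀ f ∈ ⨅ i, invariantFunctions (z i), (∀ k, f (p k) = 0) → f = 0)
    (hcard : ∑ i, absLength (z i) + Nat.card K = Nat.card V) :
    ∃ e : K → V → ℚ, (∀ k, e k ∈ ⨅ i, invariantFunctions (z i)) ∧
      ∀ k l, e k (p l) = if l = k then 1 else 0 := by
  have := Fintype.ofFinite K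
  have := Fintype.ofFinite V
  let evalRoots : ↥(⨅ i, invariantFunctions (z i)) →ₗ[ℚ] (K → ℚ) :=
    LinearMap.funLeft ℚ ℚ p ∘ₗ Submodule.subtype _
  have injective : Function.Injective evalRoots := by
    rw [injective_iff_map_eq_zero]
    exact fun f hf ↦ Subtype.ext (determined f f.2 (congrFun hf))
  have finrank_eq : Module.finrank ℚ ↥(⨅ i, invariantFunctions (z i))
      = Module.finrank ℚ (K → ℚ) := by
    have := natCard_le_sum_absLength_add_finrank z
    have := LinearMap.finrank_le_finrank_of_injective injective
    rw [Module.finrank_fintype_fun_eq_card, ← Nat.card_eq_fintype_card] at *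
    lia
  have surjective :=
    (LinearMap.injective_iff_surjective_of_finrank_eq_finrank finrank_eq).mp injective
  choose e he using fun k ↦ surjective (Pi.single k 1)
  exact ⟨fun k ↦ e k, fun k ↦ (e k).2, fun k l ↦ (congrFun (he k) l).trans (Pi.single_apply k 1 l)⟩

-- The functions dual to the roots are the indicators of the components.
theorem exists_isCactusForest [Finite V] [Finite K] {z : ι → Perm V} {p : K → V}
    (hodd : ∀ i, HasOddCycles (z i))
    (determined : ∀ f ∈ ⨅ i, invariantFunctions (z i), (∀ k, f (p k) = 0) → f = 0)
    (hcard : ∑ i, absLength (z i) + Nat.card K = Nat.card V) :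
    ∃ κ : V → K, (∀ k, κ (p k) = k) ∧ IsCactusForest κ z := by
  classical
  have := Fintype.ofFinite K
  obtain ⟨e, e_mem, e_apply⟩ := exists_dual_invariantFunctions determined hcard
  have one_mem : 1 ∈ ⨅ i, invariantFunctions (z i) :=
    mem_iInf_invariantFunctions.mpr fun _ _ ↦ rfl
  have sum_eq_one : ∑ k, e k = 1 := by
    refine sub_eq_zero.mp (determined _ (sub_mem (sum_mem fun k _ ↦ e_mem k) one_mem) fun k ↦ ?_)
    simp [e_apply]
  have exists_ne_zero (x : V) : ∃ k, e k x ≠ 0 := by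
    have := congrFun sum_eq_one x
    rw [Finset.sum_apply] at this
    obtain ⟨k, -, hk⟩ := Finset.exists_ne_zero_of_sum_ne_zero (this.trans_ne one_ne_zero)
    exact ⟨k, hk⟩
  choose κ hκ using exists_ne_zero
  have apply_root {f : V → ℚ} (hf : f ∈ ⨅ i, invariantFunctions (z i)) (x : V) :
      f x = f (p (κ x)) := by
    have product_zero := determined ((f - f (p (κ x)) • 1) * e (κ x))
      (Submodule.mem_iInf _ |>.mpr fun i ↦ mul_mem_invariantFunctions
        (Submodule.mem_iInf _ |>.mp (sub_mem hf (Submodule.smul_mem _ _ one_mem)) i)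
        (Submodule.mem_iInf _ |>.mp (e_mem _) i))
      fun l ↦ by by_cases hl : l = κ x <;> simp [e_apply, hl]
    simpa [hκ, sub_eq_zero] using congrFun product_zero x
  have eq_of_ne_zero {x : V} {k : K} (h : e k x ≠ 0) : κ x = k := by
    simpa [apply_root (e_mem k) x, e_apply] using h
  refine ⟨κ, fun k ↦ eq_of_ne_zero (by simp [e_apply]), fun i x ↦ ?_, hodd,
    fun f hf x x' hx ↦ by rw [apply_root hf, apply_root hf x', hx], hcard⟩
  have := hκ x
  rw [← mem_iInf_invariantFunctions.mp (e_mem _) i] at this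
  exact eq_of_ne_zero this

end Cacti

section AttachTriangle

variable {V ι : Type*} [DecidableEq V] [DecidableEq ι]

/-- Multiplies the `j`-th member of the family `z` by the triangle `p`. -/
def attachTriangle (j : ι) (z : ι → Perm V) (p : Fin 3 → V) : ι → Perm V :=
  Function.update z j (z j * triangle p)

variable {j : ι} {z : ι → Perm V} {p : Fin 3 → V}

theorem attachTriangle_apply_self (site : IsAttachSite (z j) p) {k : Fin 3} (hk : k + 1 ≠ 0) :
    attachTriangle j z p j (p k) = p (k + 1) := by
  rw [attachTriangle, Function.update_self, Perm.mul_apply, triangle_apply site.injective,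
    site.apply_eq _ hk]

theorem attachTriangle_left_injective (j : ι) (p : Fin 3 → V) :
    Function.Injective fun z ↦ attachTriangle j z p := by
  intro z z' h
  ext1 i
  have := congrFun h i
  obtain rfl | hi := eq_or_ne i j
  · simpa [attachTriangle] using this
  · simpa [attachTriangle, hi] using this

theorem exists_attachTriangle_eq {y : ι → Perm V} (hy : HasOddCycles (y j)) {v : V}
    (hv : y j v ≠ v) :
    ∃ z p, attachTriangle j z p = y ∧ p 0 = v ∧ IsAttachSite (z j) p := by
  obtain ⟨τ, site, hτ⟩ := hy.exists_eq_mul_triangle hv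
  exact ⟨Function.update y j τ, ![v, y j v, y j (y j v)], by simp [attachTriangle, ← hτ], rfl,
    by simpa using site⟩

variable [Finite V]

theorem iInf_invariantFunctions_attachTriangle (site : IsAttachSite (z j) p) :
    ⨅ i, invariantFunctions (attachTriangle j z p i)
      = (⨅ i, invariantFunctions (z i)) ⊓ invariantFunctions (triangle p) := by
  ext f
  simp only [attachTriangle, Submodule.mem_iInf, Submodule.mem_inf,
    Function.forall_update_iff z fun _ σ ↦ f ∈ invariantFunctions σ,
    site.invariantFunctions_mul_triangle]
  refine ⟨fun h ↦ ⟨fun i ↦ ?_, h.1.2⟩, fun h ↦ ⟨⟨h.1 j, h.2⟩, fun i _ ↦ h.1 i⟩⟩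
  exact (eq_or_ne i j).elim (fun hi ↦ hi ▸ h.1.1) (h.2 i)

theorem hasOddCycles_attachTriangle_iff (site : IsAttachSite (z j) p) (i : ι) :
    HasOddCycles (attachTriangle j z p i) ↔ HasOddCycles (z i) := by
  obtain rfl | hi := eq_or_ne i j
  · rw [attachTriangle, Function.update_self, site.hasOddCycles_mul_triangle_iff]
  · rw [attachTriangle, Function.update_of_ne hi]

theorem absLength_attachTriangle (site : IsAttachSite (z j) p) (i : ι) :
    absLength (attachTriangle j z p i) = absLength (z i) + if i = j then 2 else 0 := by
  obtain rfl | hi := eq_or_ne i j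
  · rw [attachTriangle, Function.update_self, site.absLength_mul_triangle, if_pos rfl]
  · rw [attachTriangle, Function.update_of_ne hi, if_neg hi, add_zero]

theorem sum_absLength_attachTriangle [Fintype ι] (site : IsAttachSite (z j) p) :
    ∑ i, absLength (attachTriangle j z p i) = ∑ i, absLength (z i) + 2 := by
  simp [absLength_attachTriangle site, Finset.sum_add_distrib]

end AttachTriangle

section RootedCacti

variable {V K ι : Type*} [Fintype ι]

/-- A cactus `y` with a root `v` that the permutations indexed by `J` fix. -/
structure IsRootedCactus (J : Finset ι) (y : ι → Perm V) (v : V) : Prop extends IsCactus y where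
  apply_root : ∀ i ∈ J, y i v = v

/-- A forest with a root `p k` in the fibre of `k` that the permutations indexed by `J k` fix. -/
structure IsRootedForest (κ : V → K) (J : K → Finset ι) (z : ι → Perm V) (p : K → V) : Prop
    extends IsCactusForest κ z where
  root_mem : ∀ k, κ (p k) = k
  apply_root : ∀ k, ∀ i ∈ J k, z i (p k) = p k

theorem isRootedForest_glue_iff [Finite V] [Finite K] {κ : V → K} {J : K → Finset ι}
    {u : ∀ k, (ι → Perm {x // κ x = k}) × {x // κ x = k}} :
    IsRootedForest κ J (fun i ↦ glue κ fun k ↦ (u k).1 i) (fun k ↦ (u k).2)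
      ↔ ∀ k, IsRootedCactus (J k) (u k).1 (u k).2 := by
  refine ⟨fun h k ↦ ⟨isCactusForest_glue_iff.mp h.toIsCactusForest k, fun i hi ↦ ?_⟩,
    fun h ↦ ⟨isCactusForest_glue_iff.mpr fun k ↦ (h k).toIsCactus, fun k ↦ (u k).2.2,
      fun k i hi ↦ ?_⟩⟩
  · have := h.apply_root k i hi
    rw [glue_apply] at this
    exact Subtype.ext this
  · rw [glue_apply, (h k).apply_root i hi]

-- The indicators of the components of one forest are invariant for the other.
theorem IsRootedForest.component_unique {κ κ' : V → K} {J J' : K → Finset ι} {z : ι → Perm V}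
    {p : K → V} (h : IsRootedForest κ J z p) (h' : IsRootedForest κ' J' z p) : κ = κ' := by
  classical
  ext x
  have indicator_mem : (fun x' ↦ if κ x' = κ x then (1 : ℚ) else 0)
      ∈ ⨅ i, invariantFunctions (z i) :=
    mem_iInf_invariantFunctions.mpr fun i x' ↦ by simp only [h.apply_eq]
  have := h'.eq_of_invariant _ indicator_mem x (p (κ' x)) (h'.root_mem _).symm
  simpa [h.root_mem, eq_comm] using this

variable {J : Finset ι} {j : ι}

theorem IsRootedForest.isAttachSite {κ : V → Fin 3} {z : ι → Perm V} {p : Fin 3 → V}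
    (h : IsRootedForest κ ![J, {j}, {j}] z p) : IsAttachSite (z j) p where
  injective := Function.LeftInverse.injective h.root_mem
  apply_eq k hk := h.apply_root k j (by fin_cases k <;> simp_all)

variable [DecidableEq V] [DecidableEq ι]

theorem IsRootedForest.isRootedCactus_attachTriangle [Finite V] {κ : V → Fin 3}
    {z : ι → Perm V} {p : Fin 3 → V} (h : IsRootedForest κ ![J, {j}, {j}] z p) (hj : j ∉ J) :
    IsRootedCactus J (attachTriangle j z p) (p 0) where
  hasOddCycles i := (hasOddCycles_attachTriangle_iff h.isAttachSite i).mpr (h.hasOddCycles i)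
  eq_of_invariant f hf x x' := by
    rw [iInf_invariantFunctions_attachTriangle h.isAttachSite] at hf
    have eq_root (x : V) : f x = f (p 0) := by
      rw [h.eq_of_invariant f hf.1 x (p (κ x)) (h.root_mem _).symm]
      exact (mem_invariantFunctions_triangle h.isAttachSite.injective).mp hf.2 _
    rw [eq_root x, eq_root x']
  sum_absLength := by
    have := h.sum_absLength
    rw [Nat.card_fin] at this
    rw [sum_absLength_attachTriangle h.isAttachSite, this]
  apply_root i hi := by
    rw [attachTriangle, Function.update_of_ne (ne_of_mem_of_not_mem hi hj)]
    exact h.apply_root 0 i hi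

theorem IsRootedForest.eq_of_attachTriangle_eq {κ κ' : V → Fin 3} {z z' : ι → Perm V}
    {p p' : Fin 3 → V} (h : IsRootedForest κ ![J, {j}, {j}] z p)
    (h' : IsRootedForest κ' ![J, {j}, {j}] z' p')
    (attach_eq : attachTriangle j z p = attachTriangle j z' p') (root_eq : p 0 = p' 0) :
    κ = κ' ∧ z = z' ∧ p = p' := by
  have step {k : Fin 3} (hk : k + 1 ≠ 0) (hpk : p k = p' k) : p (k + 1) = p' (k + 1) := by
    rw [← attachTriangle_apply_self h.isAttachSite hk,
      ← attachTriangle_apply_self h'.isAttachSite hk, attach_eq, hpk]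
  have p_eq_one : p 1 = p' 1 := step (k := 0) (by decide) root_eq
  obtain rfl : p = p' := funext <| Fin.forall_fin_succ.mpr
    ⟨root_eq, Fin.forall_fin_two.mpr ⟨p_eq_one, step (k := 1) (by decide) p_eq_one⟩⟩
  obtain rfl : z = z' := attachTriangle_left_injective j p attach_eq
  exact ⟨h.component_unique h', rfl, rfl⟩

theorem IsRootedCactus.exists_isRootedForest [Finite V] {y : ι → Perm V} {v : V}
    (h : IsRootedCactus J y v) (hj : j ∉ J) (hv : y j v ≠ v) :
    ∃ κ z p, IsRootedForest κ ![J, {j}, {j}] z p ∧ attachTriangle j z p = y ∧ p 0 = v := by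
  obtain ⟨z, p, rfl, rfl, site⟩ := exists_attachTriangle_eq (h.hasOddCycles j) hv
  have determined : ∀ f ∈ ⨅ i, invariantFunctions (z i), (∀ k, f (p k) = 0) → f = 0 := by
    intro f hf hroots
    have f_mem : f ∈ ⨅ i, invariantFunctions (attachTriangle j z p i) := by
      rw [iInf_invariantFunctions_attachTriangle site]
      exact ⟨hf, (mem_invariantFunctions_triangle site.injective).mpr fun k ↦ by simp [hroots]⟩
    ext x
    rw [h.eq_of_invariant f f_mem x (p 0), hroots, Pi.zero_apply]
  obtain ⟨κ, root_mem, forest⟩ := exists_isCactusForest (K := Fin 3)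
    (fun i ↦ (hasOddCycles_attachTriangle_iff site i).mp (h.hasOddCycles i)) determined
    (by rw [Nat.card_fin, ← h.sum_absLength, sum_absLength_attachTriangle site])
  refine ⟨κ, z, p, ⟨forest, root_mem, fun k i hi ↦ ?_⟩, rfl, rfl⟩
  obtain rfl | hk := eq_or_ne k 0
  · have := h.apply_root i hi
    rwa [attachTriangle, Function.update_of_ne (ne_of_mem_of_not_mem hi hj)] at this
  · obtain rfl : i = j := by fin_cases k <;> simp_all
    exact site.apply_eq k hk

end RootedCacti

section RootedCactusSum

variable {V K ι : Type*} [Fintype ι]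

/-- The monomial recording the absolute lengths of the permutations in a family. -/
noncomputable def absLengthMonomial (y : ι → Perm V) : MvPolynomial ι ℚ :=
  ∏ i, MvPolynomial.X i ^ absLength (y i)

/-- The generating function by absolute lengths of the cacti on `V` that are rooted at a point
fixed by the permutations indexed by `J`. -/
noncomputable def rootedCactusSum (J : Finset ι) (V : Type*) [Finite V] : MvPolynomial ι ℚ :=
  ∑ c ∈ (Set.toFinite {c : (ι → Perm V) × V | IsRootedCactus J c.1 c.2}).toFinset,
    absLengthMonomial c.1

/-- The generating function by absolute lengths of the rooted forests on the fibres of `κ`. -/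
noncomputable def rootedForestSum [Finite V] [Finite K] (κ : V → K) (J : K → Finset ι) :
    MvPolynomial ι ℚ :=
  ∑ c ∈ (Set.toFinite {c : (ι → Perm V) × (K → V) | IsRootedForest κ J c.1 c.2}).toFinset,
    absLengthMonomial c.1

theorem coeff_absLengthMonomial (y : ι → Perm V) (r : ι → ℕ)
    [Decidable (∀ i, absLength (y i) = r i)] :
    MvPolynomial.coeff (Finsupp.equivFunOnFinite.symm r) (absLengthMonomial y)
      = if ∀ i, absLength (y i) = r i then 1 else 0 := by
  have : absLengthMonomial y
      = MvPolynomial.monomial (Finsupp.equivFunOnFinite.symm fun i ↦ absLength (y i)) 1 := by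
    rw [MvPolynomial.monomial_eq, Finsupp.prod_fintype _ _ (by simp)]
    simp [absLengthMonomial]
  classical
  rw [this, MvPolynomial.coeff_monomial]
  simp only [Equiv.apply_eq_iff_eq, funext_iff]

theorem absLengthMonomial_glue [Finite V] [Fintype K] {κ : V → K}
    (u : ∀ k, ι → Perm {x // κ x = k}) :
    absLengthMonomial (fun i ↦ glue κ fun k ↦ u k i) = ∏ k, absLengthMonomial (u k) := by
  simp only [absLengthMonomial, absLength_glue, ← Finset.prod_pow_eq_pow_sum]
  exact Finset.prod_comm

theorem absLengthMonomial_attachTriangle [Finite V] [DecidableEq V] [DecidableEq ι] {j : ι}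
    {z : ι → Perm V} {p : Fin 3 → V} (site : IsAttachSite (z j) p) :
    absLengthMonomial (attachTriangle j z p) = MvPolynomial.X j ^ 2 * absLengthMonomial z := by
  simp only [absLengthMonomial, absLength_attachTriangle site, pow_add, Finset.prod_mul_distrib]
  rw [mul_comm, Finset.prod_eq_single j (by simp +contextual) (by simp), if_pos rfl]

theorem rootedForestSum_eq_prod [Finite V] [Fintype K] (κ : V → K) (J : K → Finset ι) :
    rootedForestSum κ J = ∏ k, rootedCactusSum (J k) {x // κ x = k} := by
  classical
  simp only [rootedForestSum, rootedCactusSum, Finset.prod_univ_sum]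
  symm
  refine Finset.sum_bij (fun u _ ↦ (fun i ↦ glue κ fun k ↦ (u k).1 i, fun k ↦ (u k).2)) ?_ ?_ ?_ ?_
  · simp [isRootedForest_glue_iff]
  · intro u _ u' _ h
    rw [Prod.mk.injEq] at h
    ext1 k
    refine Prod.ext (funext fun i ↦ ?_) (Subtype.ext (congrFun h.2 k))
    exact congrFun ((glueEquiv κ).injective (Subtype.ext (congrFun h.1 i))) k
  · rintro ⟨z, p⟩ h
    rw [Set.Finite.mem_toFinset] at h
    let u (k : K) : (ι → Perm {x // κ x = k}) × {x // κ x = k} :=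
      (fun i ↦ (glueEquiv κ).symm ⟨z i, h.apply_eq i⟩ k, ⟨p k, h.root_mem k⟩)
    refine ⟨u, ?_, rfl⟩
    simp only [Fintype.mem_piFinset, Set.Finite.mem_toFinset]
    exact isRootedForest_glue_iff (u := u).mp h
  · exact fun u _ ↦ (absLengthMonomial_glue fun k ↦ (u k).1).symm

theorem sum_rootedForestSum_eq [Fintype V] [DecidableEq V] {J : Finset ι} {j : ι} (hj : j ∉ J) :
    MvPolynomial.X j ^ 2 * ∑ κ : V → Fin 3, rootedForestSum κ ![J, {j}, {j}]
      = ∑ c ∈ (Set.toFinite {c : (ι → Perm V) × V |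
          IsRootedCactus J c.1 c.2 ∧ c.1 j c.2 ≠ c.2}).toFinset, absLengthMonomial c.1 := by
  classical
  simp only [rootedForestSum]
  rw [Finset.sum_sigma', Finset.mul_sum]
  refine Finset.sum_bij (fun s _ ↦ (attachTriangle j s.2.1 s.2.2, s.2.2 0)) ?_ ?_ ?_ ?_ <;>
    simp only [Finset.mem_sigma, Finset.mem_univ, true_and, Set.Finite.mem_toFinset,
      Set.mem_ofPred_eq]
  · rintro ⟨κ, z, p⟩ h
    refine ⟨h.isRootedCactus_attachTriangle hj, ?_⟩
    rw [attachTriangle_apply_self h.isAttachSite (by decide)]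
    exact h.isAttachSite.injective.ne (by decide)
  · rintro ⟨κ, z, p⟩ h ⟨κ', z', p'⟩ h' e
    rw [Prod.mk.injEq] at e
    obtain ⟨rfl, rfl, rfl⟩ := h.eq_of_attachTriangle_eq h' e.1 e.2
    rfl
  · rintro ⟨y, v⟩ ⟨h, hv⟩
    obtain ⟨κ, z, p, forest, hy, hp⟩ := h.exists_isRootedForest hj hv
    exact ⟨⟨κ, z, p⟩, forest, by simp [hy, hp]⟩
  · rintro ⟨κ, z, p⟩ h
    exact (absLengthMonomial_attachTriangle h.isAttachSite).symm

-- Either `y j` fixes the root, or its cycle through the root starts with a triangle whose removal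
-- leaves three cacti.
theorem rootedCactusSum_eq_insert_add [Fintype V] [DecidableEq V] [DecidableEq ι]
    {J : Finset ι} {j : ι} (hj : j ∉ J) :
    rootedCactusSum J V = rootedCactusSum (insert j J) V + MvPolynomial.X j ^ 2 *
      ∑ κ : V → Fin 3, ∏ k, rootedCactusSum (![J, {j}, {j}] k) {x // κ x = k} := by
  simp only [← rootedForestSum_eq_prod]
  rw [sum_rootedForestSum_eq hj, rootedCactusSum, rootedCactusSum,
    ← Finset.sum_filter_add_sum_filter_not _ fun c ↦ c.1 j c.2 = c.2]
  congr 1 <;> refine Finset.sum_congr (Finset.ext fun ⟨y, v⟩ ↦ ?_) fun _ _ ↦ rfl <;>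
    simp only [Finset.mem_filter, Set.Finite.mem_toFinset, Set.mem_ofPred_eq]
  exact ⟨fun ⟨h, hv⟩ ↦ ⟨h.toIsCactus, Finset.forall_mem_insert _ _ _ |>.mpr ⟨hv, h.apply_root⟩⟩,
    fun h ↦ ⟨⟨h.toIsCactus, fun i hi ↦ h.apply_root i (Finset.mem_insert_of_mem hi)⟩,
      h.apply_root j (Finset.mem_insert_self j J)⟩⟩

end RootedCactusSum

section RootedCactusSumFin

variable {V W ι : Type*} [Fintype ι]

theorem IsCactus.permCongr {y : ι → Perm V} (h : IsCactus y) (e : V ≃ W) :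
    IsCactus fun i ↦ e.permCongr (y i) where
  hasOddCycles i := (h.hasOddCycles i).permCongr e
  eq_of_invariant f hf x x' := by
    have comp_mem : f ∘ e ∈ ⨅ i, invariantFunctions (y i) := Submodule.mem_iInf _ |>.mpr fun i ↦
      (mem_invariantFunctions_permCongr e).mp (Submodule.mem_iInf _ |>.mp hf i)
    simpa using h.eq_of_invariant _ comp_mem (e.symm x) (e.symm x')
  sum_absLength := by simp only [absLength_permCongr, h.sum_absLength, Nat.card_congr e]

theorem isCactus_permCongr {y : ι → Perm V} (e : V ≃ W) :
    IsCactus (fun i ↦ e.permCongr (y i)) ↔ IsCactus y := by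
  refine ⟨fun h ↦ ?_, fun h ↦ h.permCongr e⟩
  convert h.permCongr e.symm
  exact (e.permCongr.symm_apply_apply _).symm

theorem absLengthMonomial_permCongr (y : ι → Perm V) (e : V ≃ W) :
    absLengthMonomial (fun i ↦ e.permCongr (y i)) = absLengthMonomial y := by
  simp only [absLengthMonomial, absLength_permCongr]

theorem rootedCactusSum_congr [Finite V] [Finite W] (J : Finset ι) (e : V ≃ W) :
    rootedCactusSum J V = rootedCactusSum J W := by
  refine Finset.sum_equiv ((Equiv.piCongrRight fun _ ↦ e.permCongr).prodCongr e) ?_ ?_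
  · simp only [Set.Finite.mem_toFinset]
    rintro ⟨y, v⟩
    refine ⟨fun h ↦ ⟨(isCactus_permCongr e).mpr h.toIsCactus, fun i hi ↦ ?_⟩,
      fun h ↦ ⟨(isCactus_permCongr e).mp h.toIsCactus, fun i hi ↦ ?_⟩⟩
    · simpa using h.apply_root i hi
    · simpa using h.apply_root i hi
  · exact fun c _ ↦ (absLengthMonomial_permCongr c.1 e).symm

theorem rootedCactusSum_of_isEmpty (J : Finset ι) [IsEmpty V] : rootedCactusSum J V = 0 :=
  Finset.sum_eq_zero fun c _ ↦ isEmptyElim c.2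

theorem rootedCactusSum_of_unique (J : Finset ι) [Unique V] : rootedCactusSum J V = 1 := by
  have isRootedCactus (c : (ι → Perm V) × V) : IsRootedCactus J c.1 c.2 :=
    { hasOddCycles := fun i ↦ Subsingleton.elim 1 (c.1 i) ▸ hasOddCycles_one
      eq_of_invariant := fun f _ x x' ↦ congrArg f (Subsingleton.elim x x')
      sum_absLength := by simp [Subsingleton.elim c.1 1, absLength_one]
      apply_root := fun _ _ ↦ Subsingleton.elim _ _ }
  have : Unique ((ι → Perm V) × V) := Unique.mk' _
  rw [rootedCactusSum, Finset.sum_eq_single default]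
  · simp [absLengthMonomial, Subsingleton.elim (default : (ι → Perm V) × V).1 1, absLength_one]
  · exact fun c _ hc ↦ absurd (Subsingleton.elim c _) hc
  · exact fun h ↦ (h (by simpa using isRootedCactus default)).elim

theorem IsRootedCactus.subsingleton {y : ι → Perm V} {v : V}
    (h : IsRootedCactus Finset.univ y v) : Subsingleton V := by
  classical
  have indicator_mem : (fun x ↦ if x = v then (1 : ℚ) else 0) ∈ ⨅ i, invariantFunctions (y i) :=
    mem_iInf_invariantFunctions.mpr fun i x ↦ by
      have apply_eq_iff : y i x = v ↔ x = v := by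
        conv_lhs => rw [← h.apply_root i (Finset.mem_univ i)]
        exact (y i).injective.eq_iff
      simp only [apply_eq_iff]
  have eq_root (x : V) : x = v := by simpa using h.eq_of_invariant _ indicator_mem x v
  exact ⟨fun x x' ↦ by rw [eq_root x, eq_root x']⟩

theorem rootedCactusSum_univ [Finite V] [Nontrivial V] :
    rootedCactusSum (Finset.univ : Finset ι) V = 0 := by
  refine Finset.sum_eq_zero fun c hc ↦ ?_
  rw [Set.Finite.mem_toFinset] at hc
  exact (not_subsingleton V hc.subsingleton).elim

theorem egf_rootedCactusSum_univ :
    egf (fun N ↦ rootedCactusSum (Finset.univ : Finset ι) (Fin N)) = PowerSeries.X := by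
  ext1 N
  refine factorial_mul_left_injective N ?_
  simp only [factorial_mul_coeff_egf, PowerSeries.coeff_X]
  obtain rfl | rfl | hN : N = 0 ∨ N = 1 ∨ 2 ≤ N := by lia
  · simp [rootedCactusSum_of_isEmpty]
  · simp [rootedCactusSum_of_unique]
  · have := Fin.nontrivial_iff_two_le.mpr hN
    rw [rootedCactusSum_univ, if_neg (by lia), mul_zero]

theorem egf_rootedCactusSum_eq_insert_add [DecidableEq ι] {J : Finset ι} {j : ι} (hj : j ∉ J) :
    egf (fun N ↦ rootedCactusSum J (Fin N))
      = egf (fun N ↦ rootedCactusSum (insert j J) (Fin N))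
        + PowerSeries.C (MvPolynomial.X j ^ 2) * (egf (fun N ↦ rootedCactusSum J (Fin N))
          * egf (fun N ↦ rootedCactusSum {j} (Fin N)) ^ 2) := by
  ext1 N
  have prod_egf := sum_prod_card_fiber_eq_factorial_mul_coeff N
    fun k n ↦ rootedCactusSum ((![J, {j}, {j}] : Fin 3 → Finset ι) k) (Fin n)
  have fiber_congr (κ : Fin N → Fin 3) (k : Fin 3) :=
    rootedCactusSum_congr (![J, {j}, {j}] k)
      (Fintype.equivFinOfCardEq (Fintype.card_subtype fun x ↦ κ x = k))
  refine factorial_mul_left_injective N ?_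
  simp only [map_add, PowerSeries.coeff_C_mul, mul_add, mul_left_comm _ (MvPolynomial.X j ^ 2),
    factorial_mul_coeff_egf]
  rw [rootedCactusSum_eq_insert_add hj]
  simp only [fiber_congr]
  rw [prod_egf, Fin.prod_univ_three, mul_assoc, sq (egf _)]
  simp only [Matrix.cons_val_zero, Matrix.cons_val_one, Matrix.cons_val]

theorem succ_mul_coeff_rootedCactusSum_empty (r : ι → ℕ) {n : ℕ} (hr : ∑ i, 2 * r i = n) :
    ((n + 1 : ℕ) : ℚ) * MvPolynomial.coeff (Finsupp.equivFunOnFinite.symm fun i ↦ 2 * r i)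
        (rootedCactusSum ∅ (Fin (n + 1)))
      = (n + 1).factorial * ∏ i, (lucasPoly ℚ (n + 1)).coeff (r i) := by
  classical
  have key := succ_mul_coeff_coeff_empty (R := ℚ)
    (E := fun J ↦ egf fun N ↦ rootedCactusSum J (Fin N))
    (fun J ↦ factorial_mul_left_injective 0 <| by
      simp [← PowerSeries.coeff_zero_eq_constantCoeff, coeff_egf, rootedCactusSum_of_isEmpty])
    egf_rootedCactusSum_univ (fun _ _ ↦ egf_rootedCactusSum_eq_insert_add) r hr
  rw [← factorial_mul_coeff_egf (fun N ↦ rootedCactusSum (∅ : Finset ι) (Fin N)) (n + 1), ← key,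
    ← map_natCast MvPolynomial.C, MvPolynomial.coeff_C_mul, mul_left_comm]

end RootedCactusSumFin

section FullCycle

variable {V : Type*}

theorem eq_of_mem_invariantFunctions_of_sameCycle {w : Perm V} {f : V → ℚ}
    (hf : f ∈ invariantFunctions w) {x x' : V} (h : w.SameCycle x x') : f x = f x' := by
  have f_zpow (k : ℤ) : f ((w ^ k) x) = f x := by
    induction k with
    | zero => rfl
    | succ k ih => rw [add_comm, zpow_one_add, Perm.mul_apply, hf, ih]
    | pred k ih => rw [← ih, ← hf, ← Perm.mul_apply, ← zpow_one_add, add_sub_cancel]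
  obtain ⟨k, rfl⟩ := h
  exact (f_zpow k).symm

theorem sameCycle_of_forall_eq_of_invariant {w : Perm V}
    (h : ∀ f ∈ invariantFunctions w, ∀ x x', f x = f x') (x x' : V) : w.SameCycle x x' := by
  classical
  have := h (fun u ↦ if w.SameCycle x u then 1 else 0)
    (fun u ↦ by simp only [sameCycle_apply_right]) x x'
  rw [if_pos (SameCycle.refl w x)] at this
  exact (ite_ne_right_iff.mp (this ▸ one_ne_zero)).1

variable [Fintype V] [DecidableEq V]

theorem cycleType_eq_of_forall_sameCycle [Nontrivial V] {w : Perm V}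
    (h : ∀ x x', w.SameCycle x x') : w.cycleType = {Fintype.card V} := by
  have apply_ne (x : V) : w x ≠ x := fun hx ↦
    have ⟨x', hx'⟩ := exists_ne x
    hx' ((h x x').eq_of_left hx).symm
  have ⟨x, _⟩ := exists_pair_ne V
  have isCycle : w.IsCycle := ⟨x, apply_ne x, fun x' _ ↦ h x x'⟩
  have support_eq : w.support = Finset.univ := by simpa [Finset.eq_univ_iff_forall] using apply_ne
  rw [isCycle.cycleType, support_eq, Finset.card_univ]

theorem sameCycle_of_cycleType_eq {w : Perm V} (h : w.cycleType = {Fintype.card V}) (x x' : V) :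
    w.SameCycle x x' := by
  have isCycle : w.IsCycle := by rw [← card_cycleType_eq_one, h, Multiset.card_singleton]
  have support_eq : w.support = Finset.univ := by
    rw [← Finset.card_eq_iff_eq_univ, ← Multiset.singleton_inj, ← isCycle.cycleType, h]
  have apply_ne (x : V) : w x ≠ x := mem_support.mp (support_eq ▸ Finset.mem_univ x)
  exact isCycle.sameCycle (apply_ne x) (apply_ne x')

theorem absLength_add_one_of_cycleType_eq [Nonempty V] {w : Perm V}
    (h : w.cycleType = {Fintype.card V}) : absLength w + 1 = Nat.card V :=
  finrank_quotient_add_one_of_forall_const (const_mem_invariantFunctions w 1) fun _ hf x x' ↦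
    eq_of_mem_invariantFunctions_of_sameCycle hf (sameCycle_of_cycleType_eq h x x')

variable {q : ℕ} {y : Fin q → Perm V}

theorem IsCactus.cycleType_prod_ofFn [Nontrivial V] (h : IsCactus y) :
    (List.ofFn y).prod.cycleType = {Fintype.card V} := by
  have finrank_eq := finrank_quotient_add_one_of_forall_const
    (mem_iInf_invariantFunctions.mpr fun _ _ ↦ rfl) h.eq_of_invariant
  refine cycleType_eq_of_forall_sameCycle (sameCycle_of_forall_eq_of_invariant ?_)
  rw [invariantFunctions_prod_ofFn (by have := h.sum_absLength; lia)]
  exact h.eq_of_invariant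

theorem isCactus_of_cycleType_prod_ofFn (hodd : ∀ i, HasOddCycles (y i))
    (hy : (List.ofFn y).prod.cycleType = {Fintype.card V})
    (hcard : ∑ i, absLength (y i) + 1 = Nat.card V) : IsCactus y where
  hasOddCycles := hodd
  eq_of_invariant _ hf x x' := eq_of_mem_invariantFunctions_of_sameCycle
    (iInf_invariantFunctions_le_prod_ofFn y hf) (sameCycle_of_cycleType_eq hy x x')
  sum_absLength := hcard

end FullCycle

section CactusFactorization

variable {V : Type*} {q : ℕ}

/-- The generating function by absolute lengths of the factorizations `w = y 0 * y 1 * ⋯` whose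
factors form a cactus. -/
noncomputable def cactusFactorizationSum [Finite V] (q : ℕ) (w : Perm V) :
    MvPolynomial (Fin q) ℚ :=
  ∑ y ∈ (Set.toFinite {y : Fin q → Perm V | IsCactus y ∧ (List.ofFn y).prod = w}).toFinset,
    absLengthMonomial y

theorem prod_ofFn_permCongr (g : Perm V) (y : Fin q → Perm V) :
    (List.ofFn fun i ↦ g.permCongr (y i)).prod = g * (List.ofFn y).prod * g⁻¹ := by
  rw [← MulAut.conj_apply, map_list_prod, List.map_ofFn]
  rfl

theorem cactusFactorizationSum_conj [Finite V] (w g : Perm V) :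
    cactusFactorizationSum q (g * w * g⁻¹) = cactusFactorizationSum q w := by
  refine (Finset.sum_equiv (Equiv.piCongrRight fun _ ↦ g.permCongr) (fun y ↦ ?_) fun y _ ↦
    (absLengthMonomial_permCongr y g).symm).symm
  simp only [Set.Finite.mem_toFinset, Set.mem_ofPred_eq]
  refine and_congr (isCactus_permCongr g).symm ?_
  change _ ↔ (List.ofFn fun i ↦ g.permCongr (y i)).prod = _
  rw [prod_ofFn_permCongr, mul_left_inj, mul_right_inj]

theorem rootedCactusSum_empty {ι : Type*} [Fintype ι] [Finite V] :
    rootedCactusSum (∅ : Finset ι) V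
      = Nat.card V * ∑ y ∈ (Set.toFinite {y : ι → Perm V | IsCactus y}).toFinset,
          absLengthMonomial y := by
  have := Fintype.ofFinite V
  have finset_eq : (Set.toFinite {c : (ι → Perm V) × V | IsRootedCactus ∅ c.1 c.2}).toFinset
      = (Set.toFinite {y : ι → Perm V | IsCactus y}).toFinset ×ˢ Finset.univ := by
    ext c
    simp only [Set.Finite.mem_toFinset, Set.mem_ofPred_eq, Finset.mem_product, Finset.mem_univ,
      and_true]
    exact ⟨fun h ↦ h.toIsCactus, fun h ↦ ⟨h, by simp⟩⟩
  rw [rootedCactusSum, finset_eq, Finset.sum_product_right]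
  simp only [Finset.sum_const, Finset.card_univ, nsmul_eq_mul, Nat.card_eq_fintype_card]

theorem sum_isCactus_eq_sum_cactusFactorizationSum [Fintype V] [DecidableEq V] [Nontrivial V] :
    ∑ y ∈ (Set.toFinite {y : Fin q → Perm V | IsCactus y}).toFinset, absLengthMonomial y
      = ∑ g : Perm V with g.cycleType = {Fintype.card V}, cactusFactorizationSum q g := by
  rw [← Finset.sum_fiberwise_of_maps_to (g := fun y ↦ (List.ofFn y).prod)
    (t := {g : Perm V | g.cycleType = {Fintype.card V}})]
  · refine Finset.sum_congr rfl fun g _ ↦ Finset.sum_congr ?_ fun _ _ ↦ rfl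
    ext y
    simp
  · intro y hy
    simpa using (Set.Finite.mem_toFinset _ |>.mp hy).cycleType_prod_ofFn

theorem rootedCactusSum_empty_eq_factorial_mul [Fintype V] [DecidableEq V] [Nontrivial V]
    {w : Perm V} (hw : w.cycleType = {Fintype.card V}) :
    rootedCactusSum (∅ : Finset (Fin q)) V
      = (Fintype.card V).factorial * cactusFactorizationSum q w := by
  have sum_eq (g : Perm V) (hg : g.cycleType = {Fintype.card V}) :
      cactusFactorizationSum q g = cactusFactorizationSum q w := by
    obtain ⟨h, rfl⟩ := isConj_iff.mp (isConj_iff_cycleType_eq.mpr (hw.trans hg.symm))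
    exact cactusFactorizationSum_conj w h
  rw [rootedCactusSum_empty, sum_isCactus_eq_sum_cactusFactorizationSum,
    Finset.sum_congr rfl fun g hg ↦ sum_eq g (Finset.mem_filter.mp hg).2, Finset.sum_const,
    card_of_cycleType_singleton Fintype.one_lt_card le_rfl, Nat.choose_self, mul_one,
    nsmul_eq_mul, ← mul_assoc, ← Nat.cast_mul, Nat.card_eq_fintype_card,
    Nat.mul_factorial_pred Fintype.card_ne_zero]

theorem coeff_cactusFactorizationSum [Fintype V] [DecidableEq V] {w : Perm V}
    (hw : w.cycleType = {Fintype.card V}) {s : Fin q → ℕ} (hs : ∑ i, s i + 1 = Nat.card V) :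
    MvPolynomial.coeff (Finsupp.equivFunOnFinite.symm s) (cactusFactorizationSum q w)
      = Nat.card {y : Fin q → Perm V // (List.ofFn y).prod = w ∧
          ∀ i, HasOddCycles (y i) ∧ absLength (y i) = s i} := by
  classical
  simp only [cactusFactorizationSum, MvPolynomial.coeff_sum, coeff_absLengthMonomial]
  rw [Finset.sum_boole, Nat.card_eq_fintype_card, Fintype.card_subtype]
  congr 2
  ext y
  simp only [Finset.mem_filter, Set.Finite.mem_toFinset, Set.mem_ofPred_eq, Finset.mem_univ,
    true_and, forall_and]
  refine ⟨fun ⟨⟨hy, prod_eq⟩, length_eq⟩ ↦ ⟨prod_eq, hy.hasOddCycles, length_eq⟩,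
    fun ⟨prod_eq, hodd, length_eq⟩ ↦ ⟨⟨?_, prod_eq⟩, length_eq⟩⟩
  exact isCactus_of_cycleType_prod_ofFn hodd (prod_eq ▸ hw) (by simpa only [length_eq] using hs)

theorem cycleType_finRotate_eq_singleton_card {n : ℕ} (hn : n ≠ 0) :
    (finRotate (n + 1)).cycleType = {Fintype.card (Fin (n + 1))} := by
  rw [cycleType_finRotate_of_le (by lia), Fintype.card_fin]

theorem succ_mul_natCard_factorization_finRotate {r : Fin q → ℕ} {n : ℕ} (hn : n ≠ 0)
    (hr : ∑ i, 2 * r i = n) :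
    ((n + 1 : ℕ) : ℚ) * Nat.card {y : Fin q → Perm (Fin (n + 1)) //
        (List.ofFn y).prod = finRotate (n + 1) ∧
          ∀ i, HasOddCycles (y i) ∧ absLength (y i) = 2 * r i}
      = ∏ i, (lucasPoly ℚ (n + 1)).coeff (r i) := by
  have := Fin.nontrivial_iff_two_le.mpr (show 2 ≤ n + 1 by lia)
  have hw := cycleType_finRotate_eq_singleton_card hn
  have key := succ_mul_coeff_rootedCactusSum_empty r hr
  rw [rootedCactusSum_empty_eq_factorial_mul hw, ← map_natCast MvPolynomial.C,
    MvPolynomial.coeff_C_mul, coeff_cactusFactorizationSum hw (by simp [hr]), Fintype.card_fin,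
    mul_left_comm] at key
  exact mul_left_cancel₀ (Nat.cast_ne_zero.mpr (n + 1).factorial_ne_zero) key

end CactusFactorization

section Word

variable {G : Type*} [Group G] {T : Set G} {j k : ℕ} {x y w : G}

/-- `x` is a product of `k` elements of `T`. -/
def HasWord (T : Set G) (k : ℕ) (x : G) : Prop :=
  ∃ l : List G, (∀ t ∈ l, t ∈ T) ∧ l.prod = x ∧ l.length = k

theorem hasWord_zero_one : HasWord T 0 1 := ⟨[], by simp, rfl, rfl⟩

theorem hasWord_one_of_mem (hx : x ∈ T) : HasWord T 1 x := ⟨[x], by simpa, by simp, rfl⟩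

theorem HasWord.mul (hx : HasWord T j x) (hy : HasWord T k y) : HasWord T (j + k) (x * y) := by
  obtain ⟨l, hl, rfl, rfl⟩ := hx
  obtain ⟨l', hl', rfl, rfl⟩ := hy
  exact ⟨l ++ l', by simpa [or_imp, forall_and] using ⟨hl, hl'⟩, List.prod_append,
    List.length_append⟩

theorem HasWord.mem_closure (hx : HasWord T k x) : x ∈ Subgroup.closure T := by
  obtain ⟨l, hl, rfl, rfl⟩ := hx
  exact list_prod_mem fun t ht ↦ Subgroup.subset_closure (hl t ht)

theorem HasWord.induction_on {motive : ℕ → G → Prop} (hx : HasWord T k x) (one : motive 0 1)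
    (mul : ∀ k x, ∀ t ∈ T, HasWord T k x → motive k x → motive (k + 1) (x * t)) : motive k x := by
  obtain ⟨l, hl, rfl, rfl⟩ := hx
  induction l using List.reverseRecOn with
  | nil => exact one
  | append_singleton l t ih =>
    have hl' : ∀ s ∈ l, s ∈ T := fun s hs ↦ hl s (by simp [hs])
    simpa using mul l.length l.prod t (hl t (by simp)) ⟨l, hl', rfl, rfl⟩ (ih hl')

theorem HasWord.lenT_le (hx : HasWord T k x) : lenT T x ≤ k := Nat.sInf_le hx

theorem HasWord.hasWord_lenT (hx : HasWord T k x) : HasWord T (lenT T x) x :=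
  Nat.sInf_mem (s := {k | HasWord T k x}) ⟨k, hx⟩

theorem lenT_one : lenT T 1 = 0 := Nat.le_zero.mp hasWord_zero_one.lenT_le

theorem hasWord_lenT_of_lenT_ne_zero (hx : lenT T x ≠ 0) : HasWord T (lenT T x) x :=
  Nat.sInf_mem (Nat.nonempty_of_pos_sInf (Nat.pos_of_ne_zero hx))

theorem hasWord_lenT_of_mem_closure [Finite G] (hx : x ∈ Subgroup.closure T) :
    HasWord T (lenT T x) x := by
  rw [← Subgroup.mem_toSubmonoid, Subgroup.closure_toSubmonoid_of_finite] at hx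
  obtain ⟨l, hl, hprod⟩ := Submonoid.exists_list_of_mem_closure hx
  exact HasWord.hasWord_lenT (k := l.length) ⟨l, hl, hprod, rfl⟩

theorem leT_one_left : leT T 1 x := by rw [leT, lenT_one, inv_one, one_mul, zero_add]

theorem leT_refl : leT T x x := by rw [leT, inv_mul_cancel, lenT_one, add_zero]

-- Outside the subgroup generated by `T` the length has the junk value `0`, so one of the two
-- lengths adding up to `lenT T w ≠ 0` belongs to an element of the subgroup.
theorem mem_closure_of_leT (h : leT T x w) (hw : lenT T w ≠ 0) : x ∈ Subgroup.closure T := by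
  have mem_of_ne_zero {z : G} (hz : lenT T z ≠ 0) : z ∈ Subgroup.closure T :=
    (hasWord_lenT_of_lenT_ne_zero hz).mem_closure
  by_cases hx : lenT T x = 0
  · have quotient_mem : x⁻¹ * w ∈ Subgroup.closure T :=
      mem_of_ne_zero (by rw [leT] at h; lia)
    exact inv_mem_iff.mp ((mul_mem_cancel_right (mem_of_ne_zero hw)).mp quotient_mem)
  · exact mem_of_ne_zero hx

end Word

section Multichain

variable {G : Type*} [Group G] {T : Set G} {m q : ℕ}

/-- The sequence `1, c 0, …, c (m - 1), w`. -/
def extendChain (c : Fin m → G) (w : G) : Fin (m + 2) → G := Fin.snoc (Fin.cons 1 c) w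

variable {c : Fin m → G} {w : G}

theorem extendChain_zero : extendChain c w 0 = 1 := Fin.snoc_castSucc (α := fun _ ↦ G) _ _ 0

theorem extendChain_last : extendChain c w (Fin.last _) = w := Fin.snoc_last _ _

theorem extendChain_succ_castSucc (i : Fin m) : extendChain c w i.succ.castSucc = c i := by
  rw [extendChain, Fin.snoc_castSucc, Fin.cons_succ]

theorem forall_fin_add_two {P : Fin (m + 2) → Prop} :
    (∀ k, P k) ↔ P 0 ∧ P (Fin.last _) ∧ ∀ i : Fin m, P i.succ.castSucc := by
  rw [Fin.forall_fin_succ', Fin.forall_fin_succ, Fin.castSucc_zero]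
  tauto

theorem forall_leT_extendChain_iff :
    (∀ j k, j ≤ k → leT T (extendChain c w j) (extendChain c w k))
      ↔ (∀ i j, i ≤ j → leT T (c i) (c j)) ∧ ∀ i, leT T (c i) w := by
  refine ⟨fun h ↦ ⟨fun i j hij ↦ ?_, fun i ↦ ?_⟩, fun ⟨hle, hlast⟩ ↦ forall_fin_add_two.mpr
    ⟨fun k _ ↦ ?_, fun k hk ↦ ?_, fun i ↦ forall_fin_add_two.mpr ⟨fun h ↦ ?_, fun _ ↦ ?_,
      fun j hij ↦ ?_⟩⟩⟩
  · simpa only [extendChain_succ_castSucc] using h i.succ.castSucc j.succ.castSucc (by simpa)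
  · simpa only [extendChain_succ_castSucc, extendChain_last] using
      h _ _ (Fin.le_last i.succ.castSucc)
  · exact extendChain_zero (c := c) ▸ leT_one_left
  · exact Fin.last_le_iff.mp hk ▸ leT_refl
  · simp at h
  · simpa only [extendChain_succ_castSucc, extendChain_last] using hlast i
  · simpa only [extendChain_succ_castSucc] using hle i j (by simpa using hij)

theorem partialProd_last (y : Fin q → G) :
    Fin.partialProd y (Fin.last q) = (List.ofFn y).prod := by
  rw [Fin.partialProd, List.take_of_length_le (by simp)]

/-- A chain corresponds to the factorization of `w` into its consecutive quotients. -/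
def chainEquivFactorization (m : ℕ) (w : G) :
    (Fin m → G) ≃ {y : Fin (m + 1) → G // (List.ofFn y).prod = w} where
  toFun c := ⟨fun i ↦ (extendChain c w i.castSucc)⁻¹ * extendChain c w i.succ, by
    have := congrFun (Fin.partialProd_left_inv (extendChain c w)) (Fin.last _)
    rwa [extendChain_zero, one_smul, extendChain_last, partialProd_last] at this⟩
  invFun y i := Fin.partialProd y.1 i.succ.castSucc
  left_inv c := funext fun i ↦ by
    have := congrFun (Fin.partialProd_left_inv (extendChain c w)) i.succ.castSucc
    rwa [extendChain_zero, one_smul, extendChain_succ_castSucc] at this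
  right_inv y := Subtype.ext <| funext fun i ↦ by
    have extendChain_eq : ∀ k, extendChain (fun i : Fin m ↦ Fin.partialProd y.1 i.succ.castSucc) w k
        = Fin.partialProd y.1 k :=
      forall_fin_add_two.mpr ⟨by rw [extendChain_zero, Fin.partialProd_zero],
        by rw [extendChain_last, partialProd_last, y.2], extendChain_succ_castSucc⟩
    simp only [extendChain_eq, Fin.partialProd_right_inv]

variable {X : Fin (q + 1) → G} {r : Fin q → ℕ}

theorem hasWord_sub_partialSum (h : ∀ i, HasWord T (r i) ((X i.castSucc)⁻¹ * X i.succ))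
    {j k : Fin (q + 1)} (hjk : j ≤ k) :
    ∃ d, Fin.partialSum r k = Fin.partialSum r j + d ∧ HasWord T d ((X j)⁻¹ * X k) := by
  induction k using Fin.induction with
  | zero =>
    obtain rfl := Fin.le_zero_iff.mp hjk
    exact ⟨0, rfl, inv_mul_cancel (X 0) ▸ hasWord_zero_one⟩
  | succ k ih =>
    obtain rfl | hlt := hjk.eq_or_lt
    · exact ⟨0, rfl, inv_mul_cancel (X k.succ) ▸ hasWord_zero_one⟩
    obtain ⟨d, hd, hword⟩ := ih (Fin.le_castSucc_iff.mpr hlt)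
    refine ⟨d + r k, by rw [Fin.partialSum_succ, hd, add_assoc], ?_⟩
    simpa [mul_assoc] using hword.mul (h k)

-- The words between consecutive terms concatenate to a shortest word for the last term, so each
-- of them, and each concatenation of some of them, is itself a shortest word.
theorem partialSum_eq_add_lenT (h : ∀ i, HasWord T (r i) ((X i.castSucc)⁻¹ * X i.succ))
    (hX : X 0 = 1) (hr : ∑ i, r i = lenT T (X (Fin.last q))) {j k : Fin (q + 1)} (hjk : j ≤ k) :
    Fin.partialSum r k = Fin.partialSum r j + lenT T ((X j)⁻¹ * X k) := by
  obtain ⟨a, ha, before⟩ := hasWord_sub_partialSum h (Fin.zero_le j)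
  obtain ⟨b, hb, between⟩ := hasWord_sub_partialSum h hjk
  obtain ⟨d, hd, after⟩ := hasWord_sub_partialSum h (Fin.le_last k)
  have lenT_last_le := ((before.mul between.hasWord_lenT).mul after).lenT_le
  have partialSum_last : Fin.partialSum r (Fin.last q) = ∑ i, r i := by
    rw [Fin.partialSum, List.take_of_length_le (by simp), List.sum_ofFn]
  simp only [hX, inv_one, one_mul, mul_inv_cancel_left] at lenT_last_le
  have := between.lenT_le
  rw [Fin.partialSum_zero] at ha
  lia

theorem multichain_iff_forall_hasWord [Finite G] (hX : X 0 = 1)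
    (hr : ∑ i, r i = lenT T (X (Fin.last q))) (hlen : lenT T (X (Fin.last q)) ≠ 0) :
    ((∀ j k, j ≤ k → leT T (X j) (X k)) ∧
        ∀ i, lenT T (X i.castSucc) + r i = lenT T (X i.succ))
      ↔ ∀ i : Fin q, HasWord T (r i) ((X i.castSucc)⁻¹ * X i.succ) := by
  refine ⟨fun ⟨hle, hjump⟩ i ↦ ?_, fun h ↦ ?_⟩
  · have mem_closure (k : Fin (q + 1)) : X k ∈ Subgroup.closure T :=
      mem_closure_of_leT (hle k _ (Fin.le_last k)) hlen
    have lenT_eq : lenT T ((X i.castSucc)⁻¹ * X i.succ) = r i := by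
      have := hle i.castSucc i.succ Fin.castSucc_lt_succ.le
      rw [leT, ← hjump, Nat.add_right_inj] at this
      exact this.symm
    exact lenT_eq ▸ hasWord_lenT_of_mem_closure
      (mul_mem (inv_mem (mem_closure i.castSucc)) (mem_closure i.succ))
  · have lenT_eq (k : Fin (q + 1)) : lenT T (X k) = Fin.partialSum r k := by
      simpa [hX] using (partialSum_eq_add_lenT h hX hr (Fin.zero_le k)).symm
    refine ⟨fun j k hjk ↦ ?_, fun i ↦ ?_⟩
    · rw [leT, lenT_eq, lenT_eq, partialSum_eq_add_lenT h hX hr hjk]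
    · rw [lenT_eq, lenT_eq, Fin.partialSum_succ]

theorem natCard_multichain_eq_natCard_factorization [Finite G] {r : Fin (m + 1) → ℕ}
    (hr : ∑ i, r i = lenT T w) (hlen : lenT T w ≠ 0) :
    Nat.card {c : Fin m → G // (∀ i j, i ≤ j → leT T (c i) (c j)) ∧ (∀ i, leT T (c i) w) ∧
        ∀ i : Fin (m + 1), lenT T (extendChain c w i.castSucc) + r i
          = lenT T (extendChain c w i.succ)}
      = Nat.card {y : Fin (m + 1) → G // (List.ofFn y).prod = w ∧ ∀ i, HasWord T (r i) (y i)} := by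
  refine Nat.card_congr (((chainEquivFactorization m w).subtypeEquiv fun c ↦ ?_).trans
    (Equiv.subtypeSubtypeEquivSubtypeInter (fun y : Fin (m + 1) → G ↦ (List.ofFn y).prod = w)
      fun y ↦ ∀ i, HasWord T (r i) (y i)))
  rw [← and_assoc, ← forall_leT_extendChain_iff, multichain_iff_forall_hasWord extendChain_zero
    (by rwa [extendChain_last]) (by rwa [extendChain_last])]
  rfl

end Multichain

section ThreeCycleWord

variable {V : Type*} [Fintype V] [DecidableEq V] {σ : Perm V} {k : ℕ}

theorem absLength_of_isThreeCycle (h : σ.IsThreeCycle) : absLength σ = 2 := by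
  obtain ⟨p, hp, rfl⟩ := exists_eq_triangle_of_isThreeCycle h
  exact absLength_triangle hp

theorem HasWord.absLength_le (h : HasWord {τ : Perm V | τ.IsThreeCycle} k σ) :
    absLength σ ≤ 2 * k := by
  refine h.induction_on (motive := fun k σ ↦ absLength σ ≤ 2 * k) absLength_one.le
    fun k σ t ht _ ih ↦ ?_
  have := absLength_mul_le σ t
  rw [absLength_of_isThreeCycle ht] at this
  lia

theorem HasWord.hasOddCycles (h : HasWord {τ : Perm V | τ.IsThreeCycle} k σ)
    (hk : absLength σ = 2 * k) : HasOddCycles σ := by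
  refine h.induction_on (motive := fun k σ ↦ absLength σ = 2 * k → HasOddCycles σ)
    (fun _ ↦ hasOddCycles_one) (fun k σ t ht hσ ih hk ↦ ?_) hk
  have := absLength_mul_le σ t
  have := hσ.absLength_le
  have absLength_t := absLength_of_isThreeCycle ht
  obtain ⟨p, hp, rfl⟩ := exists_eq_triangle_of_isThreeCycle ht
  exact (ih (by lia)).mul_triangle hp (absLength_mul_eq_add_iff.mp (by lia))

theorem HasOddCycles.exists_hasWord (hσ : HasOddCycles σ) :
    ∃ k, absLength σ = 2 * k ∧ HasWord {τ : Perm V | τ.IsThreeCycle} k σ := by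
  refine hσ.induction_on ⟨0, absLength_one, hasWord_zero_one⟩ ?_
  rintro τ p site ⟨k, hk, hτ⟩
  exact ⟨k + 1, by rw [site.absLength_mul_triangle, hk, mul_add_one],
    hτ.mul (hasWord_one_of_mem (isThreeCycle_triangle site.injective))⟩

theorem HasOddCycles.two_mul_lenT (hσ : HasOddCycles σ) :
    2 * lenT {τ : Perm V | τ.IsThreeCycle} σ = absLength σ := by
  obtain ⟨k, hk, hword⟩ := hσ.exists_hasWord
  have := hword.lenT_le
  have := hword.hasWord_lenT.absLength_le
  lia

theorem forall_hasWord_iff_of_absLength_prod {q : ℕ} {y : Fin q → Perm V} {r : Fin q → ℕ}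
    (hy : absLength (List.ofFn y).prod = ∑ i, 2 * r i) :
    (∀ i, HasWord {τ : Perm V | τ.IsThreeCycle} (r i) (y i))
      ↔ ∀ i, HasOddCycles (y i) ∧ absLength (y i) = 2 * r i := by
  refine ⟨fun h ↦ ?_, fun h i ↦ ?_⟩
  · have absLength_le (i : Fin q) : absLength (y i) ≤ 2 * r i := (h i).absLength_le
    have sum_eq : ∑ i, absLength (y i) = ∑ i, 2 * r i :=
      le_antisymm (Finset.sum_le_sum fun i _ ↦ absLength_le i) (hy ▸ absLength_prod_ofFn_le y)
    have absLength_eq (i : Fin q) : absLength (y i) = 2 * r i :=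
      (Finset.sum_eq_sum_iff_of_le fun i _ ↦ absLength_le i).mp sum_eq i (Finset.mem_univ i)
    exact fun i ↦ ⟨(h i).hasOddCycles (absLength_eq i), absLength_eq i⟩
  · obtain ⟨hodd, hlen⟩ := h i
    obtain ⟨k, hk, hword⟩ := hodd.exists_hasWord
    exact (show k = r i by lia) ▸ hword

theorem natCard_factorization_hasWord {q : ℕ} {w : Perm V} {r : Fin q → ℕ}
    (hw : absLength w = ∑ i, 2 * r i) :
    Nat.card {y : Fin q → Perm V // (List.ofFn y).prod = w ∧
        ∀ i, HasWord {τ : Perm V | τ.IsThreeCycle} (r i) (y i)}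
      = Nat.card {y : Fin q → Perm V // (List.ofFn y).prod = w ∧
          ∀ i, HasOddCycles (y i) ∧ absLength (y i) = 2 * r i} :=
  Nat.card_congr <| Equiv.subtypeEquivRight fun _ ↦ and_congr_right fun prod_eq ↦
    forall_hasWord_iff_of_absLength_prod (prod_eq ▸ hw)

end ThreeCycleWord

section FinRotate

variable {n : ℕ}

theorem absLength_finRotate (hn : n ≠ 0) : absLength (finRotate (n + 1)) = n := by
  simpa using absLength_add_one_of_cycleType_eq (cycleType_finRotate_eq_singleton_card hn)

theorem orderOf_finRotate (hn : n ≠ 0) : orderOf (finRotate (n + 1)) = n + 1 := by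
  rw [← lcm_cycleType, cycleType_finRotate_of_le (by lia), Multiset.lcm_singleton, normalize_eq]

theorem hasOddCycles_finRotate (hn : n ≠ 0) (heven : Even n) : HasOddCycles (finRotate (n + 1)) :=
  hasOddCycles_of_pow_eq_one heven.add_one
    (orderOf_dvd_iff_pow_eq_one.mp (orderOf_finRotate hn).dvd)

theorem lenT_finRotate (hn : n ≠ 0) :
    lenT (threeCycles (2 * n + 1)) (finRotate (2 * n + 1)) = n := by
  have hn' : 2 * n ≠ 0 := by lia
  have two_mul_lenT := (hasOddCycles_finRotate hn' (even_two_mul n)).two_mul_lenT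
  rw [absLength_finRotate hn'] at two_mul_lenT
  exact Nat.mul_left_cancel two_pos two_mul_lenT

end FinRotate

theorem lucasPoly_coeff_eq_div_mul_choose {r N : ℕ} (h : r < N) :
    (lucasPoly ℚ N).coeff r = N * (1 / (N - r : ℚ) * (N - r).choose r) := by
  obtain ⟨d, rfl⟩ := Nat.exists_eq_add_of_le h.le
  have d_ne_zero : (d : ℚ) ≠ 0 := by norm_cast; lia
  have key := mul_lucasPoly_coeff ℚ r d
  push_cast at key ⊢
  rw [add_sub_cancel_left, Nat.add_sub_cancel_left]
  field_simp
  rwa [mul_comm]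

theorem stmt14 (n m : ℕ) (hn : 1 ≤ n) (r : Fin (m+1) → ℕ) (hr : ∑ i, r i = n) :
    (Nat.card {c : Fin m → Perm (Fin (2*n+1)) //
        (∀ i j, i ≤ j → leT (threeCycles (2*n+1)) (c i) (c j)) ∧
        (∀ i, leT (threeCycles (2*n+1)) (c i) (finRotate (2*n+1))) ∧
        (∀ i : Fin (m+1),
          lenT (threeCycles (2*n+1))
              ((Fin.snoc (Fin.cons 1 c) (finRotate (2*n+1)) :
                  Fin (m+2) → Perm (Fin (2*n+1))) i.castSucc) + r i
            = lenT (threeCycles (2*n+1))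
              ((Fin.snoc (Fin.cons 1 c) (finRotate (2*n+1)) :
                  Fin (m+2) → Perm (Fin (2*n+1))) i.succ))} : ℚ)
    = (2*n+1 : ℚ) ^ m *
        ∏ i : Fin (m+1),
          (1 / (2*n+1 - (r i : ℚ))) * (Nat.choose (2*n+1 - r i) (r i) : ℚ) := by
  have sum_two_mul : ∑ i, 2 * r i = 2 * n := by rw [← Finset.mul_sum, hr]
  have lenT_rotate := lenT_finRotate (show n ≠ 0 by lia)
  have absLength_rotate : absLength (finRotate (2 * n + 1)) = 2 * n := absLength_finRotate (by lia)
  have multichains := (natCard_multichain_eq_natCard_factorization (m := m)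
    (hr.trans lenT_rotate.symm) (by lia)).trans
    (natCard_factorization_hasWord (absLength_rotate.trans sum_two_mul.symm))
  have factorizations := succ_mul_natCard_factorization_finRotate (by lia) sum_two_mul
  have coeff_eq (i : Fin (m + 1)) := lucasPoly_coeff_eq_div_mul_choose (N := 2 * n + 1) (r := r i)
    (by have := Finset.single_le_sum (fun j _ ↦ (r j).zero_le) (Finset.mem_univ i); lia)
  rw [← multichains, Finset.prod_congr rfl fun i _ ↦ coeff_eq i, Finset.prod_mul_distrib,
    Finset.prod_const, Finset.card_univ, Fintype.card_fin, pow_succ', mul_assoc] at factorizations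
  have card_eq := mul_left_cancel₀ (Nat.cast_ne_zero.mpr (2 * n).succ_ne_zero) factorizations
  push_cast at card_eq
  exact card_eq
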